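/- arXiv:1911.03234 — 2 statements merged into one kernel-verified Lean document; each statement's English description precedes it below -/
import Mathlib

section
/- Let k be a Hilbertian field of characteristic 0, and let f : Y → X be a quasi-finite morphism of separated schemes of finite type over k. Suppose that for every finite field extension h of k, the induced map Y(h) → X(h) on h-valued points is surjective. Then for every finitely generated field extension K of k, the induced map Y(K) → X(K) is surjective. -/
open AlgebraicGeometry CategoryTheory Polynomial

/-- A field `k` is *Hilbertian* if for every irreducible polynomial `F(t, X) ∈ k[t][X]`
which is separable and of positive degree in `X`, there are infinitely many `t₀ ∈ k`
such that the specialization `F(t₀, X) ∈ k[X]` is irreducible. -/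
def IsHilbertian (k : Type*) [Field k] : Prop :=
  ∀ F : Polynomial (Polynomial k), Irreducible F → F.Separable → 0 < F.natDegree →
    { t₀ : k | Irreducible (F.map (evalRingHom t₀)) }.Infinite

/-- The structure morphism `Spec L ⟶ Spec k` induced by a `k`-algebra structure on `L`. -/
noncomputable def specOver (k L : Type) [CommRing k] [CommRing L] [Algebra k L] :
    Spec (CommRingCat.of L) ⟶ Spec (CommRingCat.of k) :=
  Spec.map (CommRingCat.ofHom (algebraMap k L))

/-!
Let `L` be a finite extension of `F(t)`, where `F` is Hilbertian of characteristic zero, and suppose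
that an `L`-point of `X` does not lift to `Y`. A valuation ring `V` of an algebraic closure `Ω` of
`L` lying over `t = a` specializes it to a point over the residue field of `V ∩ L`. By
quasi-finiteness the fibre has finitely many `Ω`-points, each with a coordinate `z ∉ L`, and for
almost all `a` every point of the specialized fibre is the reduction of one of them. If the minimal
polynomial of an integral generator of a large enough finite extension of `F(t)` stays irreducible
at `t = a`, then `V` is unramified and inert in it: bases that are good at `a` remain bases of the
residue fields. Hence the residue field of `V ∩ L` is finite over `F`, it does not contain the
residues of the `z`, and the specialized point does not lift either.

So liftability of points over finite extensions passes from `F` to `F(t)`. Since the Hilbert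
property does too, by Kronecker's substitution `s ↦ X ^ M`, it reaches every `k(t₁, …, tₙ)`, and a
finitely generated `K` is finite over one of these.
-/

/-- The strong form of Hilbert's property, for a ring `R` and monic polynomials: infinitely many
specializations `t = a` of a monic irreducible `Φ ∈ R[t][X]` stay irreducible. No separability is
asked for, and `R` need not be a field, so that the property can be passed from `F` to `F(t)`
through `F[t]`. -/
def HasIrreducibleSpecializations (R : Type*) [CommRing R] : Prop :=
  ∀ Φ : R[X][X], Φ.Monic → Irreducible Φ → {a : R | Irreducible (Φ.map (evalRingHom a))}.Infinite

section SeparableTwist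

variable {R S : Type*} [CommRing R] [CommRing S]

/-- The polynomial `d ^ n * Φ (X - 1 / d)`, where `n` is the degree of `Φ`. It has coefficients in
`R` and is constant modulo `d`; this makes it separable over `R` itself as soon as `d` is in the
ideal generated by `Φ` and its derivative. -/
noncomputable def separableTwist (Φ : R[X]) (d : R) : R[X] :=
  (Φ.scaleRoots d).comp (C d * X - 1)

theorem map_separableTwist (Φ : R[X]) {d : R} (θ : R →+* S) {u : S} (hu : θ d * u = 1) :
    (separableTwist Φ d).map θ = C (θ d ^ Φ.natDegree) * (Φ.map θ).comp (X - C u) := by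
  have hlin : C (θ d) * X - 1 = C (θ d) * (X - C u) := by
    rw [mul_sub, ← C_mul, hu, C_1]
  have heval := scaleRoots_eval₂_mul (p := Φ) (C.comp θ) (X - C u) d
  rw [separableTwist, ← eval₂_C_X (p := Polynomial.map θ _), eval₂_map, eval₂_comp]
  simpa [hlin, Polynomial.comp, eval₂_map] using heval

theorem isCoprime_separableTwist_C {Φ : R[X]} (hΦ : Φ.Monic) (d : R) :
    IsCoprime (separableTwist Φ d) (C d) := by
  let q := Ideal.Quotient.mk (Ideal.span {(C d : R[X])})
  have hd : q (C d) = 0 := Ideal.Quotient.eq_zero_iff_mem.2 (Ideal.mem_span_singleton_self _)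
  have hconst : q (separableTwist Φ d) = q ((-1) ^ Φ.natDegree) := by
    rw [separableTwist, Polynomial.comp, hom_eval₂, eval₂_eq_sum_range, natDegree_scaleRoots,
      Finset.sum_range_succ, Finset.sum_eq_zero]
    · simp [coeff_scaleRoots, hΦ.coeff_natDegree, hd]
    · intro i hi
      have hpos : Φ.natDegree - i ≠ 0 := Nat.sub_ne_zero_of_lt (Finset.mem_range.1 hi)
      simp [coeff_scaleRoots, hd, hpos]
  obtain ⟨c, hc⟩ := Ideal.mem_span_singleton.1 (Ideal.Quotient.eq.1 hconst)
  refine ⟨(-1) ^ Φ.natDegree, -((-1) ^ Φ.natDegree * c), ?_⟩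
  have hsign : ((-1 : R[X]) ^ Φ.natDegree) * (-1) ^ Φ.natDegree = 1 := by simp [← mul_pow]
  linear_combination (-1) ^ Φ.natDegree * hc + hsign

theorem isCoprime_of_isUnit_mk {f g : R[X]} (h : IsUnit (AdjoinRoot.mk f g)) : IsCoprime f g := by
  obtain ⟨b, hb⟩ := h.exists_right_inv
  obtain ⟨b, rfl⟩ := AdjoinRoot.mk_surjective b
  rw [← map_mul, ← map_one (AdjoinRoot.mk f), AdjoinRoot.mk_eq_mk] at hb
  obtain ⟨c, hc⟩ := hb
  exact ⟨-c, b, by linear_combination hc⟩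

-- In `R[X]/(G)`, where `G` is the twist, `d` is invertible and `X - 1/d` is a root of `Φ`.
theorem separable_separableTwist {Φ : R[X]} (hΦ : Φ.Monic) {d : R} {A B : R[X]}
    (hAB : A * Φ + B * derivative Φ = C d) : (separableTwist Φ d).Separable := by
  let G := separableTwist Φ d
  let θ : R →+* AdjoinRoot G := AdjoinRoot.of G
  obtain ⟨u, hu⟩ : ∃ u, θ d * u = 1 := by
    obtain ⟨p, q, hpq⟩ := isCoprime_separableTwist_C hΦ d
    refine ⟨AdjoinRoot.mk G q, ?_⟩
    have := congrArg (AdjoinRoot.mk G) hpq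
    rwa [map_add, map_mul, AdjoinRoot.mk_self, mul_zero, zero_add, map_mul, AdjoinRoot.mk_C,
      map_one, mul_comm] at this
  let x := AdjoinRoot.root G - u
  have hdu : IsUnit (θ d) := .of_mul_eq_one _ hu
  have hmap : G.map θ = _ := map_separableTwist Φ θ hu
  have hroot : (Φ.map θ).eval x = 0 := by
    have := AdjoinRoot.eval₂_root G
    rw [eval₂_eq_eval_map, hmap] at this
    simpa [x, (hdu.pow _).mul_right_eq_zero] using this
  have hderiv : IsUnit ((derivative (Φ.map θ)).eval x) := by
    have := congrArg (fun P => (P.map θ).eval x) hAB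
    simp only [Polynomial.map_add, Polynomial.map_mul, eval_add, eval_mul, hroot, mul_zero,
      zero_add, ← derivative_map, map_C, eval_C] at this
    exact isUnit_of_mul_isUnit_right (this ▸ hdu)
  refine isCoprime_of_isUnit_mk (g := derivative G) ?_
  rw [← AdjoinRoot.aeval_eq, aeval_def, AdjoinRoot.algebraMap_eq, eval₂_eq_eval_map,
    ← derivative_map, hmap, derivative_C_mul, derivative_comp]
  simpa [x] using (hdu.pow _).mul hderiv

theorem irreducible_map_separableTwist_iff {L : Type*} [Field L] (Φ : R[X]) {d : R} (θ : R →+* L)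
    (hd : θ d ≠ 0) : Irreducible ((separableTwist Φ d).map θ) ↔ Irreducible (Φ.map θ) := by
  have hshift : (Φ.map θ).comp (X - C (θ d)⁻¹) = algEquivAevalXAddC (-(θ d)⁻¹) (Φ.map θ) := by
    simp [Polynomial.comp, aeval_def, sub_eq_add_neg]
  rw [map_separableTwist Φ θ (mul_inv_cancel₀ hd),
    irreducible_isUnit_mul (isUnit_C.2 (hd.isUnit.pow _)), hshift, MulEquiv.irreducible_iff]

variable [IsDomain R] {d : R}

theorem natDegree_separableTwist (Φ : R[X]) (hd : d ≠ 0) :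
    (separableTwist Φ d).natDegree = Φ.natDegree := by
  rw [separableTwist, natDegree_comp, natDegree_scaleRoots, ← C_1, natDegree_sub_C,
    natDegree_C_mul_X d hd, mul_one]

theorem isPrimitive_separableTwist {Φ : R[X]} (hΦ : Φ.Monic) (hd : d ≠ 0) :
    (separableTwist Φ d).IsPrimitive := by
  have hlead : (separableTwist Φ d).leadingCoeff = d ^ Φ.natDegree := by
    have hlin : (C d * X - 1 : R[X]) = C d * X + C (-1) := by simp [sub_eq_add_neg]
    rw [separableTwist, hlin, leadingCoeff_comp (by rw [natDegree_linear hd]; exact one_ne_zero),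
      leadingCoeff_linear hd, leadingCoeff_scaleRoots, hΦ.leadingCoeff, one_mul,
      natDegree_scaleRoots]
  intro r hr
  have hrd : C r ∣ C d ^ Φ.natDegree := by
    rw [← C_pow, ← hlead]
    exact map_dvd C ((C_dvd_iff_dvd_coeff _ _).1 hr _)
  exact isUnit_C.1 ((isCoprime_separableTwist_C hΦ d).pow_right.isUnit_of_dvd' hr hrd)

theorem exists_mul_add_mul_derivative_eq_C {Q : Type*} [Field Q] [Algebra R Q]
    [IsFractionRing R Q] {Φ : R[X]} (h : (Φ.map (algebraMap R Q)).Separable) :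
    ∃ d : R, d ≠ 0 ∧ ∃ A B : R[X], A * Φ + B * derivative Φ = C d := by
  obtain ⟨A, B, hAB⟩ := h
  obtain ⟨a, ha, hA⟩ := IsLocalization.integerNormalization_spec (nonZeroDivisors R) A
  obtain ⟨b, hb, hB⟩ := IsLocalization.integerNormalization_spec (nonZeroDivisors R) B
  refine ⟨a * b, mul_ne_zero (nonZeroDivisors.ne_zero ha) (nonZeroDivisors.ne_zero hb),
    C b * IsLocalization.integerNormalization (nonZeroDivisors R) A,
    C a * IsLocalization.integerNormalization (nonZeroDivisors R) B,
    map_injective _ (IsFractionRing.injective R Q) ?_⟩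
  have hsmul (r : R) (P : Q[X]) : r • P = C (algebraMap R Q r) * P := by
    rw [← smul_eq_C_mul, algebraMap_smul]
  rw [derivative_map] at hAB
  simp only [Polynomial.map_add, Polynomial.map_mul, map_C, hA, hB, hsmul, map_mul]
  linear_combination C (algebraMap R Q a) * C (algebraMap R Q b) * hAB

end SeparableTwist

theorem IsHilbertian.hasIrreducibleSpecializations {k : Type*} [Field k] [CharZero k]
    (hk : IsHilbertian k) : HasIrreducibleSpecializations k := by
  intro Φ hΦ hirr
  have hirrQ : Irreducible (Φ.map (algebraMap k[X] (RatFunc k))) :=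
    hΦ.irreducible_iff_irreducible_map_fraction_map.1 hirr
  obtain ⟨d, hd, A, B, hAB⟩ := exists_mul_add_mul_derivative_eq_C hirrQ.separable
  have hinj := IsFractionRing.injective k[X] (RatFunc k)
  have hirrG : Irreducible (separableTwist Φ d) :=
    (isPrimitive_separableTwist hΦ hd).irreducible_of_irreducible_map_of_injective hinj
      ((irreducible_map_separableTwist_iff Φ _ ((map_ne_zero_iff _ hinj).2 hd)).2 hirrQ)
  have hinf := hk _ hirrG (separable_separableTwist hΦ hAB)
    ((natDegree_separableTwist Φ hd).symm ▸ hΦ.natDegree_pos_of_not_isUnit hirr.not_isUnit)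
  refine (hinf.sdiff (finite_setOfPred_isRoot hd)).mono ?_
  rintro a ⟨hirr_a, hda⟩
  exact (irreducible_map_separableTwist_iff Φ (evalRingHom a) hda).1 hirr_a

section CenteredValuations

open Filter

variable {F Ω : Type*} [Field F] [Field Ω] [Algebra F[X] Ω]

/-- The valuation ring `V` of an overfield `Ω` of `F(t)` lies over the point `t = a` of the affine
line over `F`: it contains `F[t]` and its maximal ideal contains `t - a`. -/
structure IsCenteredAt (V : ValuationSubring Ω) (a : F) : Prop where
  algebraMap_mem (p : F[X]) : algebraMap F[X] Ω p ∈ V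
  valuation_X_sub_C_lt_one : V.valuation (algebraMap F[X] Ω (X - C a)) < 1

theorem exists_isCenteredAt [FaithfulSMul F[X] Ω] (a : F) :
    ∃ V : ValuationSubring Ω, IsCenteredAt V a := by
  let e := AlgEquiv.ofInjective (Algebra.ofId F[X] Ω) (FaithfulSMul.algebraMap_injective F[X] Ω)
  let evalAt : (Algebra.ofId F[X] Ω).range.toSubring →+* F := (evalRingHom a).comp e.symm
  obtain ⟨V, hle, hker⟩ :=
    Ideal.image_subset_nonunits_valuationSubring _ (RingHom.ker_ne_top evalAt)
  refine ⟨V, fun p => hle ⟨p, rfl⟩, hker ⟨e (X - C a), ?_, rfl⟩⟩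
  change eval a (e.symm (e (X - C a))) = 0
  rw [e.symm_apply_apply, eval_sub, eval_X, eval_C, sub_self]

namespace IsCenteredAt

variable {V : ValuationSubring Ω} {a : F}

theorem valuation_C_eq_one (hV : IsCenteredAt V a) {c : F} (hc : c ≠ 0) :
    V.valuation (algebraMap F[X] Ω (C c)) = 1 := by
  refine le_antisymm ((V.valuation_le_one_iff _).2 (hV.algebraMap_mem _)) ?_
  have hinv := (V.valuation_le_one_iff _).2 (hV.algebraMap_mem (C c⁻¹))
  calc (1 : V.ValueGroup)
      = V.valuation (algebraMap F[X] Ω (C c)) * V.valuation (algebraMap F[X] Ω (C c⁻¹)) := by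
        rw [← map_mul, ← map_mul, ← C_mul, mul_inv_cancel₀ hc, C_1, map_one, map_one]
    _ ≤ V.valuation (algebraMap F[X] Ω (C c)) := mul_le_of_le_one_right' hinv

theorem valuation_sub_C_eval_lt_one (hV : IsCenteredAt V a) (p : F[X]) :
    V.valuation (algebraMap F[X] Ω (p - C (p.eval a))) < 1 := by
  obtain ⟨q, hq⟩ := X_sub_C_dvd_sub_C_eval (p := p) (a := a)
  rw [hq, map_mul, map_mul]
  exact mul_lt_one_of_lt_of_le hV.valuation_X_sub_C_lt_one
    ((V.valuation_le_one_iff _).2 (hV.algebraMap_mem q))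

theorem valuation_lt_one_of_eval_eq_zero (hV : IsCenteredAt V a) {p : F[X]} (hp : p.eval a = 0) :
    V.valuation (algebraMap F[X] Ω p) < 1 := by
  simpa [hp] using hV.valuation_sub_C_eval_lt_one p

theorem valuation_eq_one_of_eval_ne_zero (hV : IsCenteredAt V a) {p : F[X]} (hp : p.eval a ≠ 0) :
    V.valuation (algebraMap F[X] Ω p) = 1 := by
  rw [← sub_add_cancel p (C (p.eval a)), map_add, Valuation.map_add_eq_of_lt_right,
    hV.valuation_C_eq_one hp]
  rw [hV.valuation_C_eq_one hp]
  exact hV.valuation_sub_C_eval_lt_one p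

theorem mem_of_isIntegral (hV : IsCenteredAt V a) {z : Ω} (hz : IsIntegral F[X] z) : z ∈ V := by
  obtain ⟨p, hp, hpz⟩ := hz
  let ψ : F[X] →+* V := (algebraMap F[X] Ω).codRestrict V.toSubring hV.algebraMap_mem
  obtain ⟨w, rfl⟩ := IsIntegrallyClosed.isIntegral_iff.1
    (show IsIntegral V z from ⟨p.map ψ, hp.map ψ, by rw [eval₂_map]; exact hpz⟩)
  exact w.2

theorem exists_valuation_sub_C_lt_one (hV : IsCenteredAt V a) {E : Type*} [Field E]
    [Algebra F[X] E] [IsFractionRing F[X] E] [Algebra E Ω] [IsScalarTower F[X] E Ω] {e : E}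
    (he : algebraMap E Ω e ∈ V) :
    ∃ c : F, V.valuation (algebraMap E Ω e - algebraMap F[X] Ω (C c)) < 1 := by
  obtain ⟨p, q, hrel, hpq⟩ := IsFractionRing.exists_reduced_fraction F[X] e
  have hval : algebraMap E Ω e * algebraMap F[X] Ω q = algebraMap F[X] Ω p := by
    rw [← hpq, IsScalarTower.algebraMap_apply F[X] E Ω, IsScalarTower.algebraMap_apply F[X] E Ω,
      ← map_mul, IsLocalization.mk'_spec]
  have hqa : (q : F[X]).eval a ≠ 0 := by
    intro hqa
    have hpa : p.eval a = 0 := by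
      by_contra hpa
      have := mul_lt_one_of_lt_of_le (hV.valuation_lt_one_of_eval_eq_zero hqa)
        ((V.valuation_le_one_iff _).2 he)
      rw [← map_mul, mul_comm, hval, hV.valuation_eq_one_of_eval_ne_zero hpa] at this
      exact this.false
    exact not_isUnit_X_sub_C a (hrel (dvd_iff_isRoot.2 hpa) (dvd_iff_isRoot.2 hqa))
  refine ⟨p.eval a / (q : F[X]).eval a, ?_⟩
  have := hV.valuation_lt_one_of_eval_eq_zero
    (p := p - C (p.eval a / (q : F[X]).eval a) * q) (by simp [hqa])
  rwa [map_sub, map_mul, ← hval, ← sub_mul, map_mul, hV.valuation_eq_one_of_eval_ne_zero hqa,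
    mul_one] at this

end IsCenteredAt

variable (F) in
theorem eventually_forall_isCenteredAt_mem [Algebra.IsAlgebraic F[X] Ω] (z : Ω) :
    ∀ᶠ a : F in cofinite, ∀ V : ValuationSubring Ω, IsCenteredAt V a → z ∈ V := by
  obtain ⟨p, hp, hint⟩ := (Algebra.IsAlgebraic.isAlgebraic (R := F[X]) z).exists_integral_multiple
  refine (finite_setOfPred_isRoot hp).subset fun a ha => by_contra fun hpa => ha fun V hV => ?_
  have := (V.valuation_le_one_iff _).2 (hV.mem_of_isIntegral hint)
  rwa [Algebra.smul_def, map_mul, hV.valuation_eq_one_of_eval_ne_zero hpa, one_mul,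
    V.valuation_le_one_iff] at this

variable (F) in
theorem eventually_forall_isCenteredAt_valuation_eq_one [Algebra.IsAlgebraic F[X] Ω] {z : Ω}
    (hz : z ≠ 0) :
    ∀ᶠ a : F in cofinite, ∀ V : ValuationSubring Ω, IsCenteredAt V a → V.valuation z = 1 := by
  filter_upwards [eventually_forall_isCenteredAt_mem F z, eventually_forall_isCenteredAt_mem F z⁻¹]
    with a hmem hinv V hV
  refine le_antisymm ((V.valuation_le_one_iff _).2 (hmem V hV)) ?_
  have := (V.valuation_le_one_iff _).2 (hinv V hV)
  rwa [map_inv₀, inv_le_one₀ (by simpa [zero_lt_iff] using hz)] at this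

end CenteredValuations

section Orthonormal

open Filter

/-- A finite family `b` in `Ω` is orthonormal over the subfield `E` for the valuation of `V` if it
is contained in `V` and the valuation of each `E`-linear combination is at least that of each of
its coefficients (hence equal to their maximum). -/
structure IsOrthonormal (E : Type*) {Ω ι : Type*} [Field E] [Field Ω] [Algebra E Ω] [Fintype ι]
    (V : ValuationSubring Ω) (b : ι → Ω) : Prop where
  mem (i : ι) : b i ∈ V
  valuation_coeff_le (c : ι → E) (i : ι) :
    V.valuation (algebraMap E Ω (c i)) ≤ V.valuation (∑ j, c j • b j)

variable {F E Ω ι : Type*} [Field F] [Field E] [Field Ω] [Algebra F[X] Ω] [Algebra E Ω] [Fintype ι]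
  {V : ValuationSubring Ω} {a : F}

theorem IsCenteredAt.valuation_eval₂_map_evalRingHom_lt_one (hV : IsCenteredAt V a) {y : Ω}
    (hy : y ∈ V) {Φ : F[X][X]} (hΦy : aeval y Φ = 0) :
    V.valuation (eval₂ ((algebraMap F[X] Ω).comp C) y (Φ.map (evalRingHom a))) < 1 := by
  have hsub : eval₂ ((algebraMap F[X] Ω).comp C) y (Φ.map (evalRingHom a)) =
      -∑ i ∈ Finset.range (Φ.natDegree + 1),
        algebraMap F[X] Ω (Φ.coeff i - C ((Φ.coeff i).eval a)) * y ^ i := by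
    rw [aeval_eq_sum_range] at hΦy
    rw [eval₂_map, eval₂_eq_sum_range, eq_neg_iff_add_eq_zero, ← Finset.sum_add_distrib, ← hΦy]
    exact Finset.sum_congr rfl fun i _ => by simp [Algebra.smul_def, sub_mul]
  rw [hsub, Valuation.map_neg]
  refine V.valuation.map_sum_lt one_ne_zero fun i _ => ?_
  rw [map_mul]
  exact mul_lt_one_of_lt_of_le (hV.valuation_sub_C_eval_lt_one _)
    ((V.valuation_le_one_iff _).2 (pow_mem hy i))

theorem IsCenteredAt.eval₂_mem (hV : IsCenteredAt V a) {y : Ω} (hy : y ∈ V) (p : F[X]) :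
    eval₂ ((algebraMap F[X] Ω).comp C) y p ∈ V := by
  rw [eval₂_eq_sum_range]
  exact sum_mem fun i _ => mul_mem (hV.algebraMap_mem _) (pow_mem hy i)

variable (F) in
theorem eventually_isOrthonormal_of_mem_span [Algebra.IsAlgebraic F[X] Ω] {κ : Type*} [Fintype κ]
    {e : ι → Ω} {b : κ → Ω} (hb : LinearIndependent E b)
    (hspan : ∀ j, b j ∈ Submodule.span E (Set.range e)) :
    ∀ᶠ a : F in cofinite, ∀ V : ValuationSubring Ω, IsCenteredAt V a → IsOrthonormal E V e →
      IsOrthonormal E V b := by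
  obtain ⟨dual, hdual⟩ := (Fintype.linearCombination E b).exists_leftInverse_of_injective
    (LinearMap.ker_eq_bot.2 hb.fintypeLinearCombination_injective)
  filter_upwards [eventually_all.2 fun j => eventually_forall_isCenteredAt_mem F (b j),
    eventually_all.2 fun i => eventually_all.2 fun j =>
      eventually_forall_isCenteredAt_mem F (algebraMap E Ω (dual (e i) j))]
    with a hmem hdual_mem V hV he
  refine ⟨fun j => hmem j V hV, fun c j => ?_⟩
  have hcomb : ∑ j, c j • b j ∈ Submodule.span E (Set.range e) :=
    sum_mem fun j _ => Submodule.smul_mem _ _ (hspan j)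
  obtain ⟨r, hr⟩ := (Submodule.mem_span_range_iff_exists_fun E).1 hcomb
  have hc : c j = ∑ i, r i * dual (e i) j := by
    have := congrFun (LinearMap.congr_fun hdual c) j
    rw [LinearMap.comp_apply, Fintype.linearCombination_apply, ← hr] at this
    simpa using this.symm
  rw [hc, ← hr, map_sum]
  refine V.valuation.map_sum_le fun i _ => ?_
  rw [map_mul, map_mul]
  exact mul_le_of_le_one_right' ((V.valuation_le_one_iff _).2 (hdual_mem i j V hV)) |>.trans
    (he.valuation_coeff_le r i)

theorem mem_span_pow_of_mem_adjoin {y z : Ω} {f : E[X]} (hf : f.Monic) (hfy : aeval y f = 0)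
    (hz : z ∈ IntermediateField.adjoin E {y}) :
    z ∈ Submodule.span E (Set.range fun i : Fin f.natDegree => y ^ (i : ℕ)) := by
  classical
  have hpow := Submodule.span_range_natDegree_eq_adjoin hf hfy
  have hrange : (Set.range fun i : Fin f.natDegree => y ^ (i : ℕ)) =
      (Finset.range f.natDegree).image (y ^ ·) := by
    ext; simp [Fin.exists_iff]
  rw [hrange, hpow, Subalgebra.mem_toSubmodule,
    ← IntermediateField.adjoin_simple_toSubalgebra_of_isAlgebraic ⟨f, hf.ne_zero, hfy⟩]
  exact hz

variable [Algebra F[X] E] [IsScalarTower F[X] E Ω]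

theorem IsOrthonormal.one_le_valuation_eval₂ {y : Ω} {n : ℕ}
    (hb : IsOrthonormal E V (fun i : Fin n => y ^ (i : ℕ))) {g : F[X]} (hg : g.Monic)
    (hdeg : g.natDegree < n) :
    1 ≤ V.valuation (eval₂ ((algebraMap F[X] Ω).comp C) y g) := by
  have := hb.valuation_coeff_le (fun i => algebraMap F[X] E (C (g.coeff i))) ⟨g.natDegree, hdeg⟩
  rw [hg.coeff_natDegree, C_1, map_one, map_one, map_one] at this
  rw [eval₂_eq_sum_range' _ hdeg, ← Fin.sum_univ_eq_sum_range
    (fun i => (algebraMap F[X] Ω).comp C (g.coeff i) * y ^ i)]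
  simpa [Algebra.smul_def, ← IsScalarTower.algebraMap_apply F[X] E Ω] using this

theorem IsCenteredAt.irreducible_of_isOrthonormal_pow (hV : IsCenteredAt V a) {y : Ω}
    {Φ : F[X][X]} (hΦ : Φ.Monic) (hΦy : aeval y Φ = 0)
    (hb : IsOrthonormal E V (fun i : Fin Φ.natDegree => y ^ (i : ℕ))) :
    Irreducible (Φ.map (evalRingHom a)) := by
  have hΦ1 : Φ.natDegree ≠ 0 := fun h => by simp [hΦ.natDegree_eq_zero.1 h] at hΦy
  have hdeg : (Φ.map (evalRingHom a)).natDegree = Φ.natDegree := hΦ.natDegree_map _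
  refine (hΦ.map _).irreducible_iff_natDegree.2 ⟨fun h => hΦ1 ?_, fun g h hg hh hgh => ?_⟩
  · rw [← hdeg, h, natDegree_one]
  by_contra! hpos
  rw [← hgh, hg.natDegree_mul hh] at hdeg
  have hlt := hV.valuation_eval₂_map_evalRingHom_lt_one
    (hV.mem_of_isIntegral ⟨Φ, hΦ, hΦy⟩) hΦy
  rw [← hgh, eval₂_mul, map_mul] at hlt
  exact hlt.not_ge (one_le_mul (hb.one_le_valuation_eval₂ hg (by lia))
    (hb.one_le_valuation_eval₂ hh (by lia)))

variable [IsFractionRing F[X] E]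

theorem IsCenteredAt.isOrthonormal_of_forall_const (hV : IsCenteredAt V a) {b : ι → Ω}
    (hmem : ∀ i, b i ∈ V)
    (hindep : ∀ c : ι → F, V.valuation (∑ i, algebraMap F[X] Ω (C (c i)) * b i) < 1 → c = 0) :
    IsOrthonormal E V b := by
  refine ⟨hmem, fun c i => ?_⟩
  obtain ⟨j, -, hmax⟩ := Finset.exists_max_image Finset.univ
    (fun i => V.valuation (algebraMap E Ω (c i))) ⟨i, Finset.mem_univ i⟩
  refine (hmax i (Finset.mem_univ i)).trans ?_
  rcases eq_or_ne (c j) 0 with hcj | hcj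
  · simp [hcj]
  have hnormalized (i : ι) : algebraMap E Ω (c i / c j) ∈ V := by
    rw [← V.valuation_le_one_iff, map_div₀, map_div₀,
      div_le_one₀ (by simpa [zero_lt_iff] using hcj)]
    exact hmax i (Finset.mem_univ i)
  choose r hr using fun i => hV.exists_valuation_sub_C_lt_one (hnormalized i)
  have hunit : 1 ≤ V.valuation (∑ i, algebraMap E Ω (c i / c j) * b i) := by
    by_contra! hlt
    have hdiff : V.valuation (∑ i, (algebraMap E Ω (c i / c j) - algebraMap F[X] Ω (C (r i))) * b i)
        < 1 := by
      refine V.valuation.map_sum_lt one_ne_zero fun i _ => ?_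
      rw [map_mul]
      exact mul_lt_one_of_lt_of_le (hr i) ((V.valuation_le_one_iff _).2 (hmem i))
    have hr0 : r = 0 := by
      refine hindep r ?_
      have := V.valuation.map_sub_lt hlt hdiff
      simpa only [← Finset.sum_sub_distrib, ← sub_mul, sub_sub_cancel] using this
    simpa [hr0, hcj] using hr j
  calc V.valuation (algebraMap E Ω (c j))
      ≤ V.valuation (algebraMap E Ω (c j)) *
          V.valuation (∑ i, algebraMap E Ω (c i / c j) * b i) := le_mul_of_one_le_right' hunit
    _ = V.valuation (∑ i, c i • b i) := by
      rw [← map_mul, Finset.mul_sum]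
      simp [Algebra.smul_def, ← mul_assoc, mul_div_cancel₀ _, hcj]

theorem IsCenteredAt.exists_valuation_sub_sum_C_mul_lt_one (hV : IsCenteredAt V a) {b : ι → Ω}
    (hb : IsOrthonormal E V b) {z : Ω} (hz : z ∈ V) (hspan : z ∈ Submodule.span E (Set.range b)) :
    ∃ r : ι → F, V.valuation (z - ∑ i, algebraMap F[X] Ω (C (r i)) * b i) < 1 := by
  obtain ⟨c, rfl⟩ := (Submodule.mem_span_range_iff_exists_fun E).1 hspan
  have hc (i : ι) : algebraMap E Ω (c i) ∈ V :=
    (V.valuation_le_one_iff _).1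
      ((hb.valuation_coeff_le c i).trans ((V.valuation_le_one_iff _).2 hz))
  choose r hr using fun i => hV.exists_valuation_sub_C_lt_one (hc i)
  refine ⟨r, ?_⟩
  simp only [Algebra.smul_def, ← Finset.sum_sub_distrib, ← sub_mul]
  refine V.valuation.map_sum_lt one_ne_zero fun i _ => ?_
  rw [map_mul]
  exact mul_lt_one_of_lt_of_le (hr i) ((V.valuation_le_one_iff _).2 (hb.mem i))

theorem IsCenteredAt.isOrthonormal_pow_of_irreducible (hV : IsCenteredAt V a) {y : Ω}
    {Φ : F[X][X]} (hΦ : Φ.Monic) (hΦy : aeval y Φ = 0)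
    (hirr : Irreducible (Φ.map (evalRingHom a))) :
    IsOrthonormal E V (fun i : Fin Φ.natDegree => y ^ (i : ℕ)) := by
  have hy : y ∈ V := hV.mem_of_isIntegral ⟨Φ, hΦ, hΦy⟩
  refine hV.isOrthonormal_of_forall_const (fun i => pow_mem hy i) fun c hc => ?_
  classical
  let g : F[X] := ofFn Φ.natDegree c
  suffices hg : g = 0 from injective_ofFn _ (hg.trans (ofFn_zero _).symm)
  by_contra hg
  have hgy : V.valuation (eval₂ ((algebraMap F[X] Ω).comp C) y g) < 1 := by
    simpa [g, ofFn_eq_sum_monomial, eval₂_finsetSum, eval₂_monomial] using hc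
  have hdeg : g.degree < (Φ.map (evalRingHom a)).degree := by
    rw [hΦ.degree_map, degree_eq_natDegree hΦ.ne_zero]
    exact ofFn_degree_lt c
  obtain ⟨u, w, huw⟩ :=
    hirr.coprime_iff_not_dvd.2 fun hdvd => hg (eq_zero_of_dvd_of_degree_lt hdvd hdeg)
  have hlt (q : F[X]) {z : Ω} (hz : V.valuation z < 1) :
      V.valuation (eval₂ ((algebraMap F[X] Ω).comp C) y q * z) < 1 := by
    rw [map_mul, mul_comm]
    exact mul_lt_one_of_lt_of_le hz ((V.valuation_le_one_iff _).2 (hV.eval₂_mem hy q))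
  have hone := congrArg (eval₂ ((algebraMap F[X] Ω).comp C) y) huw
  rw [eval₂_add, eval₂_mul, eval₂_mul, eval₂_one] at hone
  have := V.valuation.map_add_lt
    (hlt u (hV.valuation_eval₂_map_evalRingHom_lt_one hy hΦy)) (hlt w hgy)
  rw [hone, map_one] at this
  exact this.false

variable [Algebra.IsAlgebraic F[X] Ω]

variable (F) in
theorem exists_isIntegral_adjoin_eq (N : IntermediateField E Ω) [FiniteDimensional E N]
    [Algebra.IsSeparable E N] :
    ∃ y : Ω, IsIntegral F[X] y ∧ IntermediateField.adjoin E {y} = N := by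
  obtain ⟨α, hα⟩ := Field.exists_primitive_element E N
  obtain ⟨p, hp, hint⟩ :=
    (Algebra.IsAlgebraic.isAlgebraic (R := F[X]) (α : Ω)).exists_integral_multiple
  have hp' : algebraMap F[X] E p ≠ 0 := by simpa using hp
  have hsmul : p • (α : Ω) = algebraMap F[X] E p • (α : Ω) := (algebraMap_smul E p (α : Ω)).symm
  refine ⟨p • (α : Ω), hint, ?_⟩
  have hadjoin :
      IntermediateField.adjoin E {p • (α : Ω)} = IntermediateField.adjoin E {(α : Ω)} := by
    rw [hsmul]
    refine le_antisymm (IntermediateField.adjoin_simple_le_iff.2 <| IntermediateField.smul_mem _ <|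
      IntermediateField.mem_adjoin_simple_self E _) (IntermediateField.adjoin_simple_le_iff.2 ?_)
    have := IntermediateField.smul_mem _ (x := (algebraMap F[X] E p)⁻¹)
      (IntermediateField.mem_adjoin_simple_self E (algebraMap F[X] E p • (α : Ω)))
    rwa [inv_smul_smul₀ hp'] at this
  rw [hadjoin, ← IntermediateField.lift_adjoin_simple, hα, IntermediateField.lift_top]

theorem HasIrreducibleSpecializations.exists_filter_eventually_isOrthonormal
    (hF : HasIrreducibleSpecializations F) (N : IntermediateField E Ω) [FiniteDimensional E N]
    [Algebra.IsSeparable E N] :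
    ∃ l : Filter F, l.NeBot ∧ l ≤ cofinite ∧ ∀ {κ : Type*} [Fintype κ] {b : κ → Ω},
      LinearIndependent E b → (∀ i, b i ∈ N) →
      ∀ᶠ a in l, ∀ V : ValuationSubring Ω, IsCenteredAt V a → IsOrthonormal E V b := by
  obtain ⟨y, hy, hyN⟩ := exists_isIntegral_adjoin_eq F N
  let Φ := minpoly F[X] y
  have hΦ : Φ.Monic := minpoly.monic hy
  refine ⟨cofinite ⊓ 𝓟 {a | Irreducible (Φ.map (evalRingHom a))},
    cofinite_inf_principal_neBot_iff.2 (hF Φ hΦ (minpoly.irreducible hy)), inf_le_left,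
    fun {κ _ b} hb hbN => ?_⟩
  have hspan (j : κ) :
      b j ∈ Submodule.span E (Set.range fun i : Fin Φ.natDegree => y ^ (i : ℕ)) := by
    have hroot : aeval y (Φ.map (algebraMap F[X] E)) = 0 := by
      rw [aeval_map_algebraMap, minpoly.aeval]
    have := mem_span_pow_of_mem_adjoin (hΦ.map _) hroot (hyN.symm ▸ hbN j)
    rwa [hΦ.natDegree_map] at this
  filter_upwards [(eventually_isOrthonormal_of_mem_span F hb hspan).filter_mono inf_le_left,
    mem_inf_of_right (mem_principal_self _)] with a hab hirr V hV
  exact hab V hV (hV.isOrthonormal_pow_of_irreducible hΦ (minpoly.aeval _ _) hirr)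

end Orthonormal

section Kronecker

open Filter

theorem HasIrreducibleSpecializations.infinite_forall_irreducible {F : Type*} [Field F] [CharZero F]
    (hF : HasIrreducibleSpecializations F) (S : Finset F[X][X])
    (hS : ∀ Ψ ∈ S, Ψ.Monic ∧ Irreducible Ψ) :
    {a : F | ∀ Ψ ∈ S, Irreducible (Ψ.map (evalRingHom a))}.Infinite := by
  let E := RatFunc F
  let Ω := AlgebraicClosure E
  have halg : Algebra.IsAlgebraic F[X] Ω :=
    (IsFractionRing.comap_isAlgebraic_iff (K := E)).2 inferInstance
  have hfaithful : FaithfulSMul F[X] Ω := (faithfulSMul_iff_algebraMap_injective F[X] Ω).2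
    ((algebraMap E Ω).injective.comp (IsFractionRing.injective F[X] E))
  have hcharE : CharZero E := charZero_of_injective_algebraMap (algebraMap F E).injective
  have hirrE (Ψ : S) : Irreducible (Ψ.1.map (algebraMap F[X] E)) :=
    (hS Ψ Ψ.2).1.irreducible_iff_irreducible_map_fraction_map.1 (hS Ψ Ψ.2).2
  choose θ hθ using fun Ψ : S =>
    IsAlgClosed.exists_aeval_eq_zero Ω _ (degree_pos_of_irreducible (hirrE Ψ)).ne'
  have hθ' (Ψ : S) : aeval (θ Ψ) Ψ.1 = 0 := by rw [← hθ Ψ, aeval_map_algebraMap]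
  let N := IntermediateField.adjoin E (Set.range θ)
  have hN : FiniteDimensional E N := IntermediateField.finiteDimensional_adjoin
    fun z _ => Algebra.IsIntegral.isIntegral z
  obtain ⟨l, hl, hle, horth⟩ := hF.exists_filter_eventually_isOrthonormal N
  have hpow (Ψ : S) : ∀ᶠ a in l, ∀ V : ValuationSubring Ω, IsCenteredAt V a →
      IsOrthonormal E V (fun i : Fin Ψ.1.natDegree => θ Ψ ^ (i : ℕ)) := by
    refine horth ?_ fun i => pow_mem
      (IntermediateField.subset_adjoin E (Set.range θ) (Set.mem_range_self Ψ)) i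
    have hdeg : Ψ.1.natDegree = (minpoly E (θ Ψ)).natDegree := by
      rw [← minpoly.eq_of_irreducible_of_monic (hirrE Ψ) (hθ Ψ) ((hS Ψ Ψ.2).1.map _),
        (hS Ψ Ψ.2).1.natDegree_map]
    rw [hdeg]
    exact linearIndependent_pow (θ Ψ)
  refine frequently_cofinite_iff_infinite.1 (Frequently.filter_mono (f := l) ?_ hle)
  refine Eventually.frequently ?_
  filter_upwards [eventually_all.2 hpow] with a ha Ψ hΨ
  obtain ⟨V, hV⟩ := exists_isCenteredAt (Ω := Ω) a
  exact hV.irreducible_of_isOrthonormal_pow (hS Ψ hΨ).1 (hθ' ⟨Ψ, hΨ⟩) (ha ⟨Ψ, hΨ⟩ V hV)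

section Digits

variable {R : Type*} [CommRing R] {M : ℕ}

theorem coeff_eval_X_pow {Γ : R[X][X]} (hΓ : ∀ i, (Γ.coeff i).natDegree < M) (i : ℕ) {j : ℕ}
    (hj : j < M) : (Γ.eval (X ^ M)).coeff (M * i + j) = (Γ.coeff i).coeff j := by
  have hterm (k : ℕ) (hk : k ≠ i) : (Γ.coeff k * (X ^ M) ^ k).coeff (M * i + j) = 0 := by
    rw [← pow_mul, coeff_mul_X_pow']
    split_ifs with hle
    · have hki : k < i := by
        by_contra! hik
        have := Nat.mul_le_mul_left M (show i + 1 ≤ k by lia)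
        lia
      have := Nat.mul_le_mul_left M (show k + 1 ≤ i by lia)
      exact coeff_eq_zero_of_natDegree_lt ((hΓ k).trans_le (by lia))
    · rfl
  have hdiag : (Γ.coeff i * (X ^ M) ^ i).coeff (M * i + j) = (Γ.coeff i).coeff j := by
    rw [← pow_mul, add_comm, coeff_mul_X_pow]
  rw [eval_eq_sum_range' (lt_add_of_pos_right Γ.natDegree (Nat.succ_pos i)), finsetSum_coeff,
    Finset.sum_eq_single i (fun k _ hk => hterm k hk) (fun hi => ?_), hdiag]
  exact absurd (Finset.mem_range.2 (by lia)) hi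

theorem eq_of_eval_X_pow_eq {Γ Γ' : R[X][X]} (hΓ : ∀ i, (Γ.coeff i).natDegree < M)
    (hΓ' : ∀ i, (Γ'.coeff i).natDegree < M) (heval : Γ.eval (X ^ M) = Γ'.eval (X ^ M)) :
    Γ = Γ' := by
  ext i j
  by_cases hj : j < M
  · rw [← coeff_eval_X_pow hΓ i hj, ← coeff_eval_X_pow hΓ' i hj, heval]
  · rw [coeff_eq_zero_of_natDegree_lt ((hΓ i).trans_le (not_lt.1 hj)),
      coeff_eq_zero_of_natDegree_lt ((hΓ' i).trans_le (not_lt.1 hj))]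

theorem exists_eval_X_pow_eq (hM : 0 < M) (G : R[X]) :
    ∃ Γ : R[X][X], (∀ i, (Γ.coeff i).natDegree < M) ∧ Γ.eval (X ^ M) = G := by
  rcases subsingleton_or_nontrivial R with hR | hR
  · exact ⟨0, fun i => by simpa using hM, Subsingleton.elim _ _⟩
  induction hn : G.natDegree using Nat.strong_induction_on generalizing G with
  | _ n ih =>
    by_cases hlt : G.natDegree < M
    · refine ⟨C G, fun i => ?_, eval_C⟩
      rcases i with - | i
      · simpa using hlt
      · simpa using hM
    have hquot : (G /ₘ X ^ M).natDegree < n := by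
      rw [natDegree_divByMonic G (monic_X_pow M), natDegree_X_pow]
      lia
    obtain ⟨Γ, hΓ, heval⟩ := ih _ hquot _ rfl
    refine ⟨C (G %ₘ X ^ M) + X * Γ, fun i => ?_, ?_⟩
    · rcases i with - | i
      · have hne : (X ^ M : R[X]) ≠ 1 := fun h => hM.ne' (by simpa using congrArg natDegree h)
        simpa using natDegree_modByMonic_lt G (monic_X_pow M) hne
      · simpa [coeff_X_mul] using hΓ i
    · rw [eval_add, eval_C, eval_mul, eval_X, heval, modByMonic_add_div]

theorem monic_eval_X_pow {Γ : R[X][X]} (hmonic : Γ.Monic) (hΓ : ∀ i, (Γ.coeff i).natDegree < M) :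
    (Γ.eval (X ^ M)).Monic := by
  have hM : 0 < M := (Nat.zero_le _).trans_lt (hΓ 0)
  refine monic_of_natDegree_le_of_coeff_eq_one (M * Γ.natDegree)
    (natDegree_le_iff_coeff_eq_zero.2 fun d hd => ?_) ?_
  · rw [← Nat.div_add_mod d M, coeff_eval_X_pow hΓ _ (Nat.mod_lt d hM)]
    rcases (Nat.le_div_iff_mul_le hM).2 ((mul_comm _ _).trans_le hd.le) |>.eq_or_lt with heq | hlt
    · rw [← heq, hmonic.coeff_natDegree, coeff_one, if_neg]
      have := Nat.div_add_mod d M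
      rw [← heq] at this
      lia
    · rw [coeff_eq_zero_of_natDegree_lt hlt, coeff_zero]
  · simpa [hmonic.coeff_natDegree] using coeff_eval_X_pow hΓ Γ.natDegree hM

end Digits

section CommRing

variable {R : Type*} [CommRing R]

theorem coeff_coeff_swap (p : R[X][X]) (i j : ℕ) :
    ((Bivariate.swap p).coeff i).coeff j = (p.coeff j).coeff i := by
  induction p using Polynomial.induction_on' with
  | add p q hp hq => simp [hp, hq]
  | monomial n f =>
    induction f using Polynomial.induction_on' with
    | add f g hf hg => simp [hf, hg]
    | monomial m r =>
      rw [Bivariate.swap_monomial_monomial]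
      simp only [coeff_monomial]
      split_ifs <;> simp [coeff_monomial, *]

theorem natDegree_lt_iff_forall_coeff_eq_zero {S : Type*} [Semiring S] {q : S[X]} {M : ℕ}
    (hM : 0 < M) : q.natDegree < M ↔ ∀ n, M ≤ n → q.coeff n = 0 := by
  rw [← Nat.le_sub_one_iff_lt hM, natDegree_le_iff_coeff_eq_zero]
  grind

theorem natDegree_swap_lt_iff {p : R[X][X]} {M : ℕ} (hM : 0 < M) :
    (Bivariate.swap p).natDegree < M ↔ ∀ i, (p.coeff i).natDegree < M := by
  simp only [natDegree_lt_iff_forall_coeff_eq_zero hM, Polynomial.ext_iff, coeff_coeff_swap,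
    coeff_zero]
  grind

theorem natDegree_coeff_lt_of_dvd [IsDomain R] {p q : R[X][X]} {M : ℕ} (hq : q ≠ 0)
    (hM : ∀ i, (q.coeff i).natDegree < M) (hpq : p ∣ q) (i : ℕ) : (p.coeff i).natDegree < M := by
  have hM0 : 0 < M := (Nat.zero_le _).trans_lt (hM 0)
  refine (natDegree_swap_lt_iff hM0).1 ?_ i
  exact (natDegree_le_of_dvd (map_dvd Bivariate.swap hpq)
    (EmbeddingLike.map_ne_zero_iff.2 hq)).trans_lt ((natDegree_swap_lt_iff hM0).2 hM)

theorem exists_prod_eq_of_monic [IsDomain R] {p : R[X]} (hp : p.Monic) :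
    ∃ S : Multiset R[X], (∀ q ∈ S, q.Monic ∧ Irreducible q) ∧ S.prod = p := by
  induction hn : p.natDegree using Nat.strong_induction_on generalizing p with
  | _ n ih =>
    by_cases hone : p = 1
    · exact ⟨0, by simp, by simp [hone]⟩
    by_cases hirr : Irreducible p
    · exact ⟨{p}, by simp [hp, hirr], by simp⟩
    simp only [hp.irreducible_iff_natDegree, hone, ne_eq, not_false_eq_true, true_and, not_forall,
      not_or] at hirr
    obtain ⟨f, g, hf, hg, rfl, hf0, hg0⟩ := hirr
    rw [hf.natDegree_mul hg] at hn
    obtain ⟨S, hS, rfl⟩ := ih _ (by lia) hf rfl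
    obtain ⟨T, hT, rfl⟩ := ih _ (by lia) hg rfl
    exact ⟨S + T, fun q hq => (Multiset.mem_add.1 hq).elim (hS q) (hT q), Multiset.prod_add S T⟩

end CommRing

theorem exists_prod_eq_and_prod_eq_of_mul_eq_prod {K ι : Type*} [Field K] [Fintype ι] {p : ι → K[X]}
    (hp : ∀ i, (p i).Monic) (hirr : ∀ i, Irreducible (p i)) {g h : K[X]} (hg : g.Monic)
    (hh : h.Monic) (hgh : g * h = ∏ i, p i) :
    ∃ I J : Finset ι, ∏ i ∈ I, p i = g ∧ ∏ i ∈ J, p i = h := by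
  classical
  obtain ⟨I, J, b, c, -, -, hbc, rfl, rfl⟩ := mul_eq_mul_prime_prod
    (s := Finset.univ) (fun i _ => (hirr i).prime) (hgh.trans (one_mul _).symm)
  have hI := monic_prod_of_monic I p fun i _ => hp i
  have hb : b = 1 := (hI.of_mul_monic_right hg).eq_one_of_isUnit (.of_mul_eq_one c hbc.symm)
  have hc : c = 1 := by simpa [hb] using hbc.symm
  exact ⟨I, J, by simp [hb], by simp [hc]⟩

-- Kronecker's criterion: `s ↦ X ^ M` turns a factorization of `Φ` into a partition of the
-- irreducible factors of `Φ.eval (X ^ M)`, and the base-`M` digits recover the factors of `Φ`.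
theorem irreducible_map_mapRingHom_of_digits {R K ι : Type*} [CommRing R] [Field K] [Fintype ι]
    (θ : R →+* K) {Φ : R[X][X]} (hΦ : Φ.Monic) (hirr : Irreducible Φ) {M : ℕ}
    (hM : ∀ i, (Φ.coeff i).natDegree < M) {p : ι → R[X]} (hp : ∀ i, (p i).Monic)
    (hprod : ∏ i, p i = Φ.eval (X ^ M)) (hpirr : ∀ i, Irreducible ((p i).map θ))
    {Γ : Finset ι → R[X][X]} (hΓM : ∀ I i, ((Γ I).coeff i).natDegree < M)
    (hΓ : ∀ I, (Γ I).eval (X ^ M) = ∏ i ∈ I, p i)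
    (hsep : ∀ I J, Γ I * Γ J ≠ Φ → (Γ I * Γ J).map (mapRingHom θ) ≠ Φ.map (mapRingHom θ)) :
    Irreducible (Φ.map (mapRingHom θ)) := by
  have heval (Ψ : R[X][X]) : (Ψ.map (mapRingHom θ)).eval (X ^ M) = (Ψ.eval (X ^ M)).map θ := by
    simpa [eval₂_eq_eval_map] using (hom_eval₂ Ψ (RingHom.id _) (mapRingHom θ) (X ^ M)).symm
  have hθM {Ψ : R[X][X]} (hΨ : ∀ i, (Ψ.coeff i).natDegree < M) (i : ℕ) :
      ((Ψ.map (mapRingHom θ)).coeff i).natDegree < M := by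
    rw [coeff_map]
    exact natDegree_map_le.trans_lt (hΨ i)
  have hΦθ := hΦ.map (mapRingHom θ)
  refine (irreducible_of_monic hΦθ fun hone => hirr.not_isUnit ?_).2 fun g h hg hh hgh => ?_
  · have hdeg : Φ.natDegree = 0 := by rw [← hΦ.natDegree_map (mapRingHom θ), hone, natDegree_one]
    rw [hΦ.natDegree_eq_zero.1 hdeg]
    exact isUnit_one
  have hgM := natDegree_coeff_lt_of_dvd hΦθ.ne_zero (hθM hM) (Dvd.intro h hgh)
  have hhM := natDegree_coeff_lt_of_dvd hΦθ.ne_zero (hθM hM) (Dvd.intro_left g hgh)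
  obtain ⟨I, J, hI, hJ⟩ := exists_prod_eq_and_prod_eq_of_mul_eq_prod (fun i => (hp i).map θ) hpirr
    (monic_eval_X_pow hg hgM) (monic_eval_X_pow hh hhM)
    (by rw [← eval_mul, hgh, heval, ← hprod, Polynomial.map_prod])
  have hdigits {I : Finset ι} {q : K[X][X]} (hqM : ∀ i, (q.coeff i).natDegree < M)
      (hI : ∏ i ∈ I, (p i).map θ = q.eval (X ^ M)) : (Γ I).map (mapRingHom θ) = q :=
    eq_of_eval_X_pow_eq (hθM (hΓM I)) hqM (by rw [heval, hΓ, ← hI, Polynomial.map_prod])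
  have hIg := hdigits hgM hI
  have hJh := hdigits hhM hJ
  have hΓΦ : Γ I * Γ J = Φ := by
    by_contra hne
    exact hsep I J hne (by rw [Polynomial.map_mul, hIg, hJh, hgh])
  refine (hirr.isUnit_or_isUnit hΓΦ.symm).imp (fun hu => ?_) fun hu => ?_
  · exact hg.eq_one_of_isUnit (hIg ▸ hu.map (mapRingHom (mapRingHom θ)))
  · exact hh.eq_one_of_isUnit (hJh ▸ hu.map (mapRingHom (mapRingHom θ)))

variable {F : Type*} [Field F]

theorem eventually_map_mapRingHom_evalRingHom_ne {Ψ Φ : F[X][X][X]} (hne : Ψ ≠ Φ) :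
    ∀ᶠ a : F in cofinite, Ψ.map (mapRingHom (evalRingHom a)) ≠
      Φ.map (mapRingHom (evalRingHom a)) := by
  obtain ⟨i, j, hij⟩ : ∃ i j, ((Ψ - Φ).coeff i).coeff j ≠ 0 := by
    by_contra! hzero
    exact hne (sub_eq_zero.1 (by ext1 i; ext1 j; simpa using hzero i j))
  refine (finite_setOfPred_isRoot hij).subset fun a ha => ?_
  have heq := not_not.1 ha
  simpa [IsRoot, sub_eq_zero] using congrArg (fun q => (q.coeff i).coeff j) heq

theorem HasIrreducibleSpecializations.infinite_irreducible_map_mapRingHom [CharZero F]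
    (hF : HasIrreducibleSpecializations F) {Φ : F[X][X][X]} (hΦ : Φ.Monic) (hirr : Irreducible Φ) :
    {a : F | Irreducible (Φ.map (mapRingHom (evalRingHom a)))}.Infinite := by
  classical
  obtain ⟨M, hM⟩ : ∃ M, ∀ i, (Φ.coeff i).natDegree < M :=
    ⟨(Bivariate.swap Φ).natDegree + 1,
      (natDegree_swap_lt_iff (Nat.succ_pos _)).1 (Nat.lt_succ_self _)⟩
  have hM0 : 0 < M := (Nat.zero_le _).trans_lt (hM 0)
  obtain ⟨S, hS, hprod⟩ := exists_prod_eq_of_monic (monic_eval_X_pow hΦ hM)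
  let p : S.ToType → F[X][X] := fun i => i.1
  choose Γ hΓM hΓ using fun I : Finset S.ToType => exists_eval_X_pow_eq hM0 (∏ i ∈ I, p i)
  have hsep : ∀ᶠ a : F in cofinite, ∀ I J, Γ I * Γ J ≠ Φ →
      (Γ I * Γ J).map (mapRingHom (evalRingHom a)) ≠ Φ.map (mapRingHom (evalRingHom a)) := by
    simp only [eventually_all]
    exact fun I J => eventually_map_mapRingHom_evalRingHom_ne
  have hfreq := frequently_cofinite_iff_infinite.2 (hF.infinite_forall_irreducible S.toFinset
    fun Ψ hΨ => hS Ψ (Multiset.mem_toFinset.1 hΨ))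
  refine frequently_cofinite_iff_infinite.1 ((hfreq.and_eventually hsep).mono fun a ha => ?_)
  exact irreducible_map_mapRingHom_of_digits _ hΦ hirr hM
    (fun i => (hS _ (Multiset.coe_mem (x := i))).1)
    (by rw [← hprod]; exact congrArg Multiset.prod S.map_univ_coe)
    (fun i => ha.1 _ (Multiset.mem_toFinset.2 Multiset.coe_mem)) hΓM hΓ ha.2

theorem HasIrreducibleSpecializations.polynomial [CharZero F]
    (hF : HasIrreducibleSpecializations F) : HasIrreducibleSpecializations F[X] := by
  intro Φ hΦ hirr
  let σ : F[X][X] ≃+* F[X][X] := (Bivariate.swap (R := F)).toRingEquiv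
  have hspec (a : F) : (Φ.map σ.toRingHom).map (mapRingHom (evalRingHom a)) =
      Φ.map (evalRingHom (C a)) := by
    rw [Polynomial.map_map]
    congr 1
    refine RingHom.ext fun q => ?_
    simpa [σ, aeval_def, eval₂_eq_eval_map] using (Bivariate.aveal_eq_map_swap a q).symm
  refine ((hF.infinite_irreducible_map_mapRingHom (hΦ.map σ.toRingHom)
    ((MulEquiv.irreducible_iff (mapEquiv σ)).2 hirr)).image C_injective.injOn).mono ?_
  rintro _ ⟨a, ha, rfl⟩
  rwa [Set.mem_ofPred_eq, ← hspec]

end Kronecker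

section FractionField

theorem irreducible_scaleRoots_iff {R : Type*} [CommRing R] [IsDomain R] {p : R[X]} (hp : p.Monic)
    {s : R} (hs : IsUnit s) : Irreducible (p.scaleRoots s) ↔ Irreducible p := by
  have key {p : R[X]} (hp : p.Monic) {s : R} (hirr : Irreducible (p.scaleRoots s)) :
      Irreducible p := by
    rw [((monic_scaleRoots_iff s).2 hp).irreducible_iff_natDegree] at hirr
    refine hp.irreducible_iff_natDegree.2 ⟨?_, fun f g hf hg hfg => ?_⟩
    · rintro rfl
      exact hirr.1 (one_scaleRoots s)
    · simpa using hirr.2 _ _ ((monic_scaleRoots_iff s).2 hf) ((monic_scaleRoots_iff s).2 hg)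
        (by rw [← mul_scaleRoots_of_noZeroDivisors, hfg])
  refine ⟨key hp, fun hirr => ?_⟩
  obtain ⟨u, rfl⟩ := hs
  refine key (s := (↑u⁻¹ : R)) ((monic_scaleRoots_iff _).2 hp) ?_
  rwa [← scaleRoots_mul, Units.mul_inv, scaleRoots_one]

theorem exists_map_eq_scaleRoots {A B : Type*} [CommRing A] [CommRing B] [Algebra A B]
    (S : Submonoid A) [IsLocalization S B] {p : B[X]} (hp : p.Monic) :
    ∃ s ∈ S, ∃ q : A[X], q.Monic ∧ q.map (algebraMap A B) = p.scaleRoots (algebraMap A B s) := by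
  obtain ⟨⟨s, hs⟩, hint⟩ := IsLocalization.exist_integer_multiples_of_finset S p.coeffs
  have hmonic := (monic_scaleRoots_iff (algebraMap A B s)).2 hp
  have hlifts : p.scaleRoots (algebraMap A B s) ∈ lifts (algebraMap A B) := by
    refine (lifts_iff_coeff_lifts _).2 fun i => ?_
    rw [coeff_scaleRoots]
    rcases lt_or_ge i p.natDegree with hi | hi
    · by_cases hzero : p.coeff i = 0
      · exact ⟨0, by simp [hzero]⟩
      obtain ⟨c, hc⟩ := hint _ (coeff_mem_coeffs hzero)
      obtain ⟨n, hn⟩ := Nat.exists_eq_add_of_lt hi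
      refine ⟨c * s ^ n, ?_⟩
      rw [show p.natDegree - i = n + 1 by lia, map_mul, hc, Algebra.smul_def, map_pow, pow_succ]
      ring
    · rw [Nat.sub_eq_zero_of_le hi, pow_zero, mul_one]
      rcases hi.eq_or_lt with rfl | hi
      · exact ⟨1, by rw [hp.coeff_natDegree, map_one]⟩
      · exact ⟨0, by rw [coeff_eq_zero_of_natDegree_lt hi, map_zero]⟩
  obtain ⟨q, hq, -, hqm⟩ := lifts_and_natDegree_eq_and_monic hlifts hmonic
  exact ⟨s, hs, q, hqm, hq⟩

theorem HasIrreducibleSpecializations.of_isFractionRing {R : Type*} (K : Type*) [CommRing R]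
    [IsDomain R] [IsIntegrallyClosed R] [Field K] [Algebra R K] [IsFractionRing R K]
    (hR : HasIrreducibleSpecializations R) : HasIrreducibleSpecializations K := by
  intro Φ hΦ hirr
  let _ := (mapRingHom (algebraMap R K)).toAlgebra
  have hloc : IsLocalization ((nonZeroDivisors R).map C) K[X] := isLocalization _ _
  obtain ⟨_, ⟨r, hr, rfl⟩, Ψ, hΨ, hΨΦ⟩ :=
    exists_map_eq_scaleRoots ((nonZeroDivisors R).map C) hΦ
  have hr0 : IsUnit (algebraMap R K r) := IsLocalization.map_units K ⟨r, hr⟩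
  have hscale : Ψ.map (mapRingHom (algebraMap R K)) = Φ.scaleRoots (C (algebraMap R K r)) := by
    rw [← map_C]
    exact hΨΦ
  have hΨirr : Irreducible Ψ := by
    refine hΨ.irreducible_of_irreducible_map (mapRingHom (algebraMap R K)) Ψ ?_
    rwa [hscale, irreducible_scaleRoots_iff hΦ (hr0.map C)]
  have hspec (a : R) : (Ψ.map (evalRingHom a)).map (algebraMap R K) =
      (Φ.map (evalRingHom (algebraMap R K a))).scaleRoots (algebraMap R K r) := by
    have hcomp : (algebraMap R K).comp (evalRingHom a) =
        (evalRingHom (algebraMap R K a)).comp (mapRingHom (algebraMap R K)) := by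
      ext <;> simp
    rw [Polynomial.map_map, hcomp, ← Polynomial.map_map, hscale,
      map_scaleRoots _ _ _ (by simp [hΦ])]
    simp
  refine ((hR Ψ hΨ hΨirr).image (IsFractionRing.injective R K).injOn).mono ?_
  rintro _ ⟨a, ha, rfl⟩
  rw [Set.mem_ofPred_eq, ← irreducible_scaleRoots_iff (hΦ.map _) hr0, ← hspec]
  exact (hΨ.map _).irreducible_iff_irreducible_map_fraction_map.1 ha

theorem HasIrreducibleSpecializations.ratFunc {F : Type*} [Field F] [CharZero F]
    (hF : HasIrreducibleSpecializations F) : HasIrreducibleSpecializations (RatFunc F) :=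
  hF.polynomial.of_isFractionRing (RatFunc F)

end FractionField

section QuasiFinite

open TensorProduct

variable {A B Ω : Type*} [CommRing A] [CommRing B] [Field Ω] [Algebra A B] [Algebra A Ω]

theorem rTensor_aeval_one_tmul {S T : Type*} [CommRing S] [CommRing T] [Algebra A S] [Algebra A T]
    (φ : S →ₐ[A] T) (x : B) (q : S[X]) :
    LinearMap.rTensor B φ.toLinearMap (aeval (1 ⊗ₜ x) q) =
      aeval (1 ⊗ₜ x) (q.map (φ : S →+* T)) := by
  change Algebra.TensorProduct.map φ (AlgHom.id A B) _ = _
  rw [aeval_def, aeval_def, eval₂_map, ← RingHom.coe_coe, hom_eval₂]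
  congr 1
  simp

variable (A Ω) in
theorem exists_fg_isIntegral_one_tmul [Algebra.QuasiFinite A B] (x : B) :
    ∃ S : Subalgebra A Ω, S.FG ∧ IsIntegral S ((1 : S) ⊗ₜ[A] x) := by
  have : Module.Finite Ω (Ω ⊗[A] B) := .of_quasiFinite
  obtain ⟨q, hq, hqx⟩ := Algebra.IsIntegral.isIntegral (R := Ω) ((1 : Ω) ⊗ₜ[A] x)
  let S := Algebra.adjoin A (q.coeffs : Set Ω)
  obtain ⟨p, hp, -, hpmonic⟩ : ∃ p : S[X], p.map (S.val : S →+* Ω) = q ∧ _ ∧ p.Monic := by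
    refine lifts_and_natDegree_eq_and_monic ((lifts_iff_coeff_lifts q).2 fun n => ?_) hq
    by_cases hn : q.coeff n = 0
    · exact ⟨0, by rw [hn, map_zero]⟩
    · exact ⟨⟨_, Algebra.subset_adjoin (coeff_mem_coeffs hn)⟩, rfl⟩
  have hzero : LinearMap.rTensor B S.val.toLinearMap (aeval (1 ⊗ₜ x) p) =
      LinearMap.rTensor B S.val.toLinearMap 0 := by
    rw [rTensor_aeval_one_tmul, hp, map_zero]
    exact hqx
  obtain ⟨T, hST, hT, hTzero⟩ :=
    TensorProduct.Algebra.eq_of_fg_of_subtype_eq ⟨q.coeffs, rfl⟩ hzero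
  rw [rTensor_aeval_one_tmul, map_zero] at hTzero
  exact ⟨T, hT, _, hpmonic.map _, hTzero⟩

theorem exists_isRoot_map_eq [IsAlgClosed Ω] {C : Subalgebra A Ω} [IsIntegrallyClosedIn C Ω]
    {M : Type*} [Field M] (π : C →+* M) {q : C[X]} (hq : q.Monic) {y : M}
    (hy : (q.map π).IsRoot y) :
    ∃ c : C, q.IsRoot c ∧ π c = y := by
  have hsplits : q.Splits := by
    refine (IsAlgClosed.splits (q.map (algebraMap C Ω))).of_splits_map_of_injective
      Subtype.val_injective fun z hz => ?_
    exact IsIntegrallyClosedIn.isIntegral_iff.1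
      ⟨q, hq, by simpa [aeval_def] using (mem_roots'.1 hz).2⟩
  have hmem : y ∈ (q.map π).roots := (mem_roots (hq.map _).ne_zero).2 hy
  rw [hsplits.roots_map_of_ne_zero (hq.map _).ne_zero] at hmem
  obtain ⟨c, hc, rfl⟩ := Multiset.mem_map.1 hmem
  exact ⟨c, isRoot_of_mem_roots hc, rfl⟩

variable {M : Type*} [Field M] [Algebra A M]

theorem exists_aeval_eq_zero_and_map_eq [IsAlgClosed Ω] {S C : Subalgebra A Ω} (hSC : S ≤ C)
    [IsIntegrallyClosedIn C Ω] {x : B} {q : S[X]} (hq : q.Monic)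
    (hqx : aeval ((1 : S) ⊗ₜ[A] x) q = 0) (π : C →ₐ[A] M) (ψ : B →ₐ[A] M) :
    ∃ c : C, aeval (c : Ω) q = 0 ∧ π c = ψ x := by
  let ι : S →+* C := Subalgebra.inclusion hSC
  have hroot : ((q.map ι).map (π : C →+* M)).IsRoot (ψ x) := by
    have := congrArg (Algebra.TensorProduct.productMap (π.comp (Subalgebra.inclusion hSC)) ψ) hqx
    rw [map_zero, aeval_def, ← RingHom.coe_coe, hom_eval₂] at this
    rw [IsRoot, Polynomial.map_map, Polynomial.eval_map, ← this]
    congr 1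
    · ext s
      simp [ι]
    · simp
  obtain ⟨c, hc, hcx⟩ := exists_isRoot_map_eq (π : C →+* M) (hq.map ι) hroot
  refine ⟨c, ?_, hcx⟩
  have := hc.map (f := algebraMap C Ω)
  rw [IsRoot, Polynomial.map_map, Polynomial.eval_map] at this
  exact this

theorem exists_ne_zero_and_exists_algHom_or_exists_aeval_eq {ι : Type*} {x : ι → B}
    (hx : Algebra.adjoin A (Set.range x) = ⊤) (y : ι → Ω) :
    ∃ w : Ω, w ≠ 0 ∧ ((∃ χ : B →ₐ[A] Ω, ∀ i, χ (x i) = y i) ∨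
      ∃ p : MvPolynomial ι A, MvPolynomial.aeval x p = 0 ∧ MvPolynomial.aeval y p = w) := by
  by_cases hp : ∃ p : MvPolynomial ι A, MvPolynomial.aeval x p = 0 ∧ MvPolynomial.aeval y p ≠ 0
  · obtain ⟨p, hpx, hpy⟩ := hp
    exact ⟨_, hpy, .inr ⟨p, hpx, rfl⟩⟩
  push Not at hp
  have hsurj : Function.Surjective (MvPolynomial.aeval (R := A) x) := by
    rwa [← AlgHom.range_eq_top, ← Algebra.adjoin_range_eq_range_aeval]
  refine ⟨1, one_ne_zero, .inl ⟨AlgHom.liftOfSurjective _ hsurj (MvPolynomial.aeval y) hp, ?_⟩⟩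
  intro i
  simpa using AlgHom.liftOfSurjective_apply _ hsurj (MvPolynomial.aeval y) hp (MvPolynomial.X i)

theorem exists_comp_eq_of_forall_map_eq {ι : Type*} {x : ι → B}
    (hx : Algebra.adjoin A (Set.range x) = ⊤) {C : Subalgebra A Ω} (π : C →ₐ[A] M) (ψ : B →ₐ[A] M)
    {c : ι → C} (hc : ∀ i, π (c i) = ψ (x i)) {χ : B →ₐ[A] Ω} (hχ : ∀ i, χ (x i) = c i) :
    ∃ χ' : B →ₐ[A] C, π.comp χ' = ψ := by
  have hmem : ∀ b, χ b ∈ C := by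
    have hle : Algebra.adjoin A (Set.range x) ≤ C.comap χ :=
      Algebra.adjoin_le (by rintro _ ⟨i, rfl⟩; simp [hχ])
    exact fun b => hle (hx ▸ Algebra.mem_top)
  refine ⟨χ.codRestrict C hmem, AlgHom.ext_of_adjoin_eq_top hx ?_⟩
  rintro _ ⟨i, rfl⟩
  rw [← hc i]
  exact congrArg π (Subtype.ext (hχ i))

variable (A B Ω) in
-- `Z` collects the coefficients of integral equations of the generators of `B` over `Ω`, and, for
-- each tuple of roots of these equations which is not a point of `B`, the value of a relation that
-- it violates.
theorem exists_finset_forall_exists_comp_eq [IsAlgClosed Ω] [Algebra.FiniteType A B]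
    [Algebra.QuasiFinite A B] :
    ∃ Z : Finset Ω, 0 ∉ Z ∧ ∀ (C : Subalgebra A Ω) [IsIntegrallyClosedIn C Ω] {M : Type*} [Field M]
      [Algebra A M] (π : C →ₐ[A] M), (∀ z ∈ Z, ∃ hz : z ∈ C, π ⟨z, hz⟩ ≠ 0) →
        ∀ ψ : B →ₐ[A] M, ∃ χ : B →ₐ[A] C, π.comp χ = ψ := by
  classical
  obtain ⟨X, hX⟩ := Algebra.FiniteType.out (R := A) (A := B)
  have hx : Algebra.adjoin A (Set.range ((↑) : X → B)) = ⊤ := by simpa using hX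
  choose S hS q hq hqx using fun x : X => exists_fg_isIntegral_one_tmul A Ω (x : B)
  choose G hG using hS
  choose w hw₀ hw using exists_ne_zero_and_exists_algHom_or_exists_aeval_eq (Ω := Ω) hx
  let roots (x : X) : Finset Ω := (q x).rootSet Ω |>.toFinset
  refine ⟨(Finset.univ.biUnion G).erase 0 ∪ (Fintype.piFinset roots).image w,
    by simpa using fun ℓ _ => hw₀ ℓ, fun C _ M _ _ π hZ ψ => ?_⟩
  have hSC (x : X) : S x ≤ C := by
    rw [← hG x]
    refine Algebra.adjoin_le fun z hz => ?_
    by_cases hz₀ : z = 0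
    · exact hz₀ ▸ C.zero_mem
    · refine (hZ z (Finset.mem_union_left _ ?_)).1
      simpa [hz₀] using ⟨_, _, hz⟩
  choose c hcroot hc using fun x : X =>
    exists_aeval_eq_zero_and_map_eq (hSC x) (hq x) (hqx x) π ψ
  rcases hw fun x => c x with ⟨χ, hχ⟩ | ⟨p, hp, hpw⟩
  · exact exists_comp_eq_of_forall_map_eq hx π ψ hc hχ
  · obtain ⟨hwC, hπw⟩ := hZ (w fun x => c x) (Finset.mem_union_right _
      (Finset.mem_image_of_mem _ (Fintype.mem_piFinset.2 fun x =>
        Set.mem_toFinset.2 ((hq x).mem_rootSet.2 (hcroot x)))))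
    have hwc : (⟨_, hwC⟩ : C) = MvPolynomial.aeval c p :=
      Subtype.ext (hpw.symm.trans (MvPolynomial.comp_aeval_apply _ C.val p).symm)
    refine absurd ?_ hπw
    rw [hwc, MvPolynomial.comp_aeval_apply, funext hc, ← MvPolynomial.comp_aeval_apply, hp,
      map_zero]

variable (A B Ω) in
theorem finite_algHom_of_quasiFinite [Algebra.QuasiFinite A B] : Finite (B →ₐ[A] Ω) := by
  have : Module.Finite Ω (Ω ⊗[A] B) := .of_quasiFinite
  exact .of_equiv _ (Algebra.TensorProduct.liftEquivRight A Ω B Ω).symm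

end QuasiFinite

section Specialization

open Filter IsLocalRing

section ResidueField

variable {L Ω : Type*} [Field L] [Field Ω] [Algebra L Ω] (V : ValuationSubring Ω)

theorem residue_eq_residue_iff_valuation_sub_lt_one {V : ValuationSubring Ω} {y z : V} :
    residue V y = residue V z ↔ V.valuation (y - z : Ω) < 1 := by
  rw [← sub_eq_zero, ← map_sub, residue_eq_zero_iff, V.valuation_lt_one_iff]
  rfl

variable (L) in
/-- The inclusion into `V` of its restriction to the subfield `L`. -/
def comapInclusion : V.comap (algebraMap L Ω) →+* V :=
  ((algebraMap L Ω).comp (V.comap (algebraMap L Ω)).subtype).codRestrict V.toSubring fun y => y.2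

instance : IsLocalHom (comapInclusion L V) where
  map_nonunit y hy := by
    have hy₀ : y ≠ 0 := by
      rintro rfl
      exact hy.ne_zero (map_zero _)
    have hinv : (y : L)⁻¹ ∈ V.comap (algebraMap L Ω) := by
      rw [ValuationSubring.mem_comap, map_inv₀, ← V.valuation_le_one_iff, map_inv₀]
      exact (inv_eq_one.2 ((V.valuation_eq_one_iff _).1 hy)).le
    exact .of_mul_eq_one ⟨_, hinv⟩ (Subtype.ext (mul_inv_cancel₀ (by simpa using hy₀)))

variable (L) in
/-- The extension of residue fields induced by restricting the valuation ring `V` of `Ω` to the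
subfield `L`. -/
noncomputable def comapResidueMap :
    ResidueField (V.comap (algebraMap L Ω)) →+* ResidueField V :=
  ResidueField.map (comapInclusion L V)

theorem residue_notMem_range_comapResidueMap {z : V}
    (hz : ∀ y : L, 1 ≤ V.valuation (z - algebraMap L Ω y)) :
    residue V z ∉ (comapResidueMap L V).range := by
  rintro ⟨y, hy⟩
  obtain ⟨y, rfl⟩ := residue_surjective y
  exact (hz y).not_gt (residue_eq_residue_iff_valuation_sub_lt_one.1 hy.symm)

end ResidueField

section Descent

variable {A B L Ω : Type*} [CommRing A] [CommRing B] [Field L] [Field Ω] [Algebra A B] [Algebra A L]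
  [Algebra A Ω]

variable (A B Ω) in
theorem exists_finset_forall_exists_residue_eq [IsAlgClosed Ω] [Algebra.FiniteType A B]
    [Algebra.QuasiFinite A B] :
    ∃ Z : Finset Ω, 0 ∉ Z ∧ ∀ (V : ValuationSubring Ω) (hA : ∀ a, algebraMap A Ω a ∈ V),
      (∀ z ∈ Z, V.valuation z = 1) → ∀ ψ : B →+* ResidueField V,
        ψ.comp (algebraMap A B) = (residue V).comp ((algebraMap A Ω).codRestrict V hA) →
        ∃ χ : B →ₐ[A] Ω, ∀ b, ∃ hb : χ b ∈ V, residue V ⟨χ b, hb⟩ = ψ b := by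
  obtain ⟨Z, hZ₀, hZ⟩ := exists_finset_forall_exists_comp_eq A B Ω
  refine ⟨Z, hZ₀, fun V hA hVZ ψ hψ => ?_⟩
  let C : Subalgebra A Ω := { V.toSubring with algebraMap_mem' := hA }
  have : IsIntegrallyClosedIn C Ω := by
    have : IsIntegrallyClosedIn V Ω :=
      (isIntegrallyClosed_iff_isIntegrallyClosedIn Ω).1 inferInstance
    exact this
  let _ : Algebra A (ResidueField V) :=
    ((residue V).comp ((algebraMap A Ω).codRestrict V hA)).toAlgebra
  let π : C →ₐ[A] ResidueField V := { residue V with commutes' := fun _ => rfl }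
  let ψ' : B →ₐ[A] ResidueField V := { ψ with commutes' := RingHom.congr_fun hψ }
  have hCZ (z : Ω) (hz : z ∈ Z) : ∃ hzC : z ∈ C, π ⟨z, hzC⟩ ≠ 0 := by
    have hzV : z ∈ V := (V.valuation_le_one_iff z).1 (hVZ z hz).le
    exact ⟨hzV, (residue_ne_zero_iff_isUnit (R := V) _).2
      ((V.valuation_eq_one_iff ⟨z, hzV⟩).2 (hVZ z hz))⟩
  obtain ⟨χ, hχ⟩ := hZ C π hCZ ψ'
  exact ⟨C.val.comp χ, fun b => ⟨(χ b).2, AlgHom.congr_fun hχ b⟩⟩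

variable [Algebra L Ω] [IsScalarTower A L Ω]

theorem nonempty_algHom_of_forall_mem_range {χ : B →ₐ[A] Ω}
    (hχ : ∀ b, χ b ∈ Set.range (algebraMap L Ω)) : Nonempty (B →ₐ[A] L) := by
  let ι := IsScalarTower.toAlgHom A L Ω
  exact ⟨(AlgEquiv.ofInjective ι (algebraMap L Ω).injective).symm.toAlgHom.comp
    (χ.codRestrict ι.range hχ)⟩

variable (A B L Ω) in
theorem exists_finset_notMem_range_of_isEmpty_algHom [Algebra.QuasiFinite A B]
    (hL : IsEmpty (B →ₐ[A] L)) :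
    ∃ Z : Finset Ω, (∀ z ∈ Z, z ∉ Set.range (algebraMap L Ω)) ∧
      ∀ χ : B →ₐ[A] Ω, ∃ b, χ b ∈ Z := by
  classical
  have := finite_algHom_of_quasiFinite A B Ω
  have := Fintype.ofFinite (B →ₐ[A] Ω)
  have hχ (χ : B →ₐ[A] Ω) : ∃ b, χ b ∉ Set.range (algebraMap L Ω) := by
    by_contra! hχ
    exact not_isEmpty_iff.2 (nonempty_algHom_of_forall_mem_range hχ) hL
  choose b hb using hχ
  exact ⟨Finset.univ.image fun χ : B →ₐ[A] Ω => χ (b χ), by simpa using hb,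
    fun χ => ⟨b χ, Finset.mem_image_of_mem _ (Finset.mem_univ χ)⟩⟩

variable (A B L Ω) in
theorem exists_finset_forall_comp_algebraMap_ne [IsAlgClosed Ω] [Algebra.FiniteType A B]
    [Algebra.QuasiFinite A B] (hL : IsEmpty (B →ₐ[A] L)) :
    ∃ Z Z' : Finset Ω, 0 ∉ Z ∧ (∀ z ∈ Z', z ∉ Set.range (algebraMap L Ω)) ∧
      ∀ (V : ValuationSubring Ω) (hA : ∀ a, algebraMap A L a ∈ V.comap (algebraMap L Ω)),
        (∀ z ∈ Z, V.valuation z = 1) → (∀ z ∈ Z', ∀ y, 1 ≤ V.valuation (z - algebraMap L Ω y)) →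
        ∀ ψ : B →+* ResidueField (V.comap (algebraMap L Ω)),
          ψ.comp (algebraMap A B) ≠ (residue _).comp ((algebraMap A L).codRestrict _ hA) := by
  obtain ⟨Z, hZ₀, hZ⟩ := exists_finset_forall_exists_residue_eq A B Ω
  obtain ⟨Z', hZ'L, hZ'⟩ := exists_finset_notMem_range_of_isEmpty_algHom A B L Ω hL
  refine ⟨Z, Z', hZ₀, hZ'L, fun V hA hVZ hVZ' ψ hψ => ?_⟩
  have hAV (a : A) : algebraMap A Ω a ∈ V := by
    rw [IsScalarTower.algebraMap_apply A L Ω]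
    exact hA a
  obtain ⟨χ, hχ⟩ := hZ V hAV hVZ ((comapResidueMap L V).comp ψ) (by
    rw [RingHom.comp_assoc, hψ]
    refine RingHom.ext fun a => congrArg (residue V) (Subtype.ext ?_)
    exact (IsScalarTower.algebraMap_apply A L Ω a).symm)
  obtain ⟨b, hb⟩ := hZ' χ
  obtain ⟨hbV, hbψ⟩ := hχ b
  exact residue_notMem_range_comapResidueMap V (hVZ' _ hb) ⟨ψ b, hbψ.symm⟩

end Descent

section ResidueExtension

theorem mem_span_range_algebraMap_iff {E L Ω ι : Type*} [CommSemiring E] [CommSemiring L]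
    [Semiring Ω] [Algebra E L] [Algebra E Ω] [Algebra L Ω] [IsScalarTower E L Ω]
    (b : Module.Basis ι E L) {z : Ω} :
    z ∈ Submodule.span E (Set.range fun i => algebraMap L Ω (b i)) ↔
      z ∈ Set.range (algebraMap L Ω) := by
  have hrange : Set.range (fun i => algebraMap L Ω (b i)) =
      (IsScalarTower.toAlgHom E L Ω).toLinearMap '' Set.range b := Set.range_comp _ _
  rw [hrange, Submodule.span_image, b.span_eq, Submodule.map_top]
  rfl

variable {F E L Ω ι : Type*} [Field F] [Field E] [Field L] [Field Ω] [Algebra E Ω] [Algebra L Ω]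
  [Algebra F[X] E] [IsFractionRing F[X] E] [Algebra F[X] Ω] [IsScalarTower F[X] E Ω] [Fintype ι]
  {V : ValuationSubring Ω} {a : F} {b : ι → Ω}

theorem IsOrthonormal.one_le_valuation_sub {z y : Ω}
    (hb : IsOrthonormal E V fun o : Option ι => o.casesOn' z b)
    (hy : y ∈ Submodule.span E (Set.range b)) : 1 ≤ V.valuation (z - y) := by
  obtain ⟨c, rfl⟩ := (Submodule.mem_span_range_iff_exists_fun E).1 hy
  simpa [Fintype.sum_option, sub_eq_add_neg] using
    hb.valuation_coeff_le (fun o => o.casesOn' 1 fun i => -c i) none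

theorem HasIrreducibleSpecializations.exists_isCenteredAt_isOrthonormal [CharZero E]
    [Algebra.IsAlgebraic F[X] Ω] [FaithfulSMul F[X] Ω] (hF : HasIrreducibleSpecializations F)
    (hb : LinearIndependent E b) {Z Z' : Finset Ω} (hZ : 0 ∉ Z)
    (hZ' : ∀ z ∈ Z', z ∉ Submodule.span E (Set.range b)) :
    ∃ (a : F) (V : ValuationSubring Ω), IsCenteredAt V a ∧ IsOrthonormal E V b ∧
      (∀ z ∈ Z, V.valuation z = 1) ∧
      ∀ z ∈ Z', ∀ y ∈ Submodule.span E (Set.range b), 1 ≤ V.valuation (z - y) := by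
  have halg : Algebra.IsAlgebraic E Ω := (IsFractionRing.comap_isAlgebraic_iff (A := F[X])).1 ‹_›
  let N := IntermediateField.adjoin E (Set.range b ∪ Z')
  have hN : FiniteDimensional E N :=
    have : Finite ↑(Set.range b ∪ Z') := (Set.finite_range b).union Z'.finite_toSet
    IntermediateField.finiteDimensional_adjoin fun z _ => Algebra.IsIntegral.isIntegral z
  have hbN (i : ι) : b i ∈ N := IntermediateField.subset_adjoin _ _ (.inl ⟨i, rfl⟩)
  have hZ'N (z : Z') : (z : Ω) ∈ N := IntermediateField.subset_adjoin _ _ (.inr z.2)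
  obtain ⟨l, hl, hle, horth⟩ := hF.exists_filter_eventually_isOrthonormal N
  have hZ₀ (z : Z) : (z : Ω) ≠ 0 := fun hz => hZ (hz ▸ z.2)
  have hunit : ∀ᶠ a in l, ∀ z : Z, ∀ V : ValuationSubring Ω, IsCenteredAt V a →
      V.valuation (z : Ω) = 1 :=
    eventually_all.2 fun z =>
      (eventually_forall_isCenteredAt_valuation_eq_one F (hZ₀ z)).filter_mono hle
  have hoption : ∀ᶠ a in l, ∀ z : Z', ∀ V : ValuationSubring Ω, IsCenteredAt V a →
      IsOrthonormal E V fun o : Option ι => o.casesOn' (z : Ω) b :=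
    eventually_all.2 fun z => horth (hb.option (hZ' z z.2)) (Option.rec (hZ'N z) hbN)
  obtain ⟨a, hab, haZ, haZ'⟩ := ((horth hb hbN).and (hunit.and hoption)).exists
  obtain ⟨V, hV⟩ := exists_isCenteredAt (Ω := Ω) a
  exact ⟨a, V, hV, hab V hV, fun z hz => haZ ⟨z, hz⟩ V hV,
    fun z hz y hy => (haZ' ⟨z, hz⟩ V hV).one_le_valuation_sub hy⟩

variable [Algebra F[X] L] [IsScalarTower F[X] L Ω]

theorem IsCenteredAt.algebraMap_mem_comap (hV : IsCenteredAt V a) (p : F[X]) :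
    algebraMap F[X] L p ∈ V.comap (algebraMap L Ω) := by
  rw [ValuationSubring.mem_comap, ← IsScalarTower.algebraMap_apply]
  exact hV.algebraMap_mem p

variable (L) in
/-- The embedding of the constants `F` into the residue field of the restriction to `L` of a
valuation ring lying over a point of the affine line over `F`. -/
noncomputable def IsCenteredAt.constantMap (hV : IsCenteredAt V a) :
    F →+* ResidueField (V.comap (algebraMap L Ω)) :=
  (residue _).comp
    (((algebraMap F[X] L).comp C).codRestrict _ fun c => hV.algebraMap_mem_comap (C c))

theorem IsCenteredAt.finite_constantMap [Algebra E L] [IsScalarTower E L Ω]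
    (hV : IsCenteredAt V a) (b : Module.Basis ι E L)
    (hb : IsOrthonormal E V fun i => algebraMap L Ω (b i)) : (hV.constantMap L).Finite := by
  let _ := (hV.constantMap L).toAlgebra
  let b' (i : ι) : V.comap (algebraMap L Ω) := ⟨b i, hb.mem i⟩
  refine Module.Finite.of_surjective (Fintype.linearCombination F fun i => residue _ (b' i))
    fun z => ?_
  obtain ⟨z, rfl⟩ := residue_surjective z
  obtain ⟨r, hr⟩ := hV.exists_valuation_sub_sum_C_mul_lt_one hb z.2
    ((mem_span_range_algebraMap_iff b).2 ⟨z, rfl⟩)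
  have hresidue : Fintype.linearCombination F (fun i => residue _ (b' i)) r =
      residue _ (∑ i, ⟨_, hV.algebraMap_mem_comap (C (r i))⟩ * b' i) := by
    rw [map_sum]
    exact Finset.sum_congr rfl fun i _ => (map_mul (residue _) _ _).symm
  refine ⟨r, hresidue.trans ((comapResidueMap L V).injective (Eq.symm ?_))⟩
  refine residue_eq_residue_iff_valuation_sub_lt_one.2 ?_
  change V.valuation (algebraMap L Ω z - algebraMap L Ω (Subtype.val (∑ i, _))) < 1
  simpa [b', AddSubmonoidClass.coe_finsetSum, ← IsScalarTower.algebraMap_apply] using hr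

end ResidueExtension

section FiniteType

variable {k A Ω : Type*} [CommRing k] [CommRing A] [Field Ω] [Algebra k A] [Algebra k Ω]
  [Algebra A Ω] [IsScalarTower k A Ω]

variable (k A Ω) in
theorem exists_finset_forall_algebraMap_mem [Algebra.FiniteType k A] :
    ∃ Z : Finset Ω, 0 ∉ Z ∧ ∀ V : ValuationSubring Ω, (∀ c, algebraMap k Ω c ∈ V) →
      (∀ z ∈ Z, V.valuation z = 1) → ∀ x, algebraMap A Ω x ∈ V := by
  classical
  obtain ⟨S, hS⟩ := Algebra.FiniteType.out (R := k) (A := A)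
  refine ⟨(S.image (algebraMap A Ω)).erase 0, Finset.notMem_erase _ _, fun V hk hV x => ?_⟩
  let V' : Subalgebra k Ω := { V.toSubring with algebraMap_mem' := hk }
  have hle : Algebra.adjoin k (S : Set A) ≤ V'.comap (IsScalarTower.toAlgHom k A Ω) := by
    refine Algebra.adjoin_le fun s hs => ?_
    by_cases hs₀ : algebraMap A Ω s = 0
    · exact (hs₀ ▸ zero_mem V : algebraMap A Ω s ∈ V)
    · exact (V.valuation_le_one_iff _).1
        (hV _ (Finset.mem_erase.2 ⟨hs₀, Finset.mem_image_of_mem _ hs⟩)).le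
  exact hle (hS ▸ Algebra.mem_top)

end FiniteType

section FiniteSpecialization

variable {k F A ι : Type*} [CommRing k] [Field F] [CommRing A] [Finite ι] [Algebra k F]
  [Algebra k A] [Algebra.FiniteType k A] (B : ι → Type*) [∀ i, CommRing (B i)]
  [∀ i, Algebra A (B i)] [∀ i, Algebra.FiniteType A (B i)] [∀ i, Algebra.QuasiFinite A (B i)]

variable (k) in
theorem HasIrreducibleSpecializations.exists_isCenteredAt_forall_comp_algebraMap_ne
    {E L Ω : Type*} [Field E] [CharZero E] [Field L] [Field Ω] [IsAlgClosed Ω]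
    [Algebra F[X] E] [IsFractionRing F[X] E] [Algebra F[X] L] [Algebra F[X] Ω]
    [Algebra.IsAlgebraic F[X] Ω] [FaithfulSMul F[X] Ω] [Algebra E L] [FiniteDimensional E L]
    [Algebra E Ω] [Algebra L Ω] [IsScalarTower F[X] E Ω] [IsScalarTower F[X] L Ω]
    [IsScalarTower E L Ω] [Algebra A L] [Algebra A Ω] [IsScalarTower A L Ω] [Algebra k Ω]
    [IsScalarTower k A Ω] [IsScalarTower k F[X] Ω] (hF : HasIrreducibleSpecializations F)
    (hB : ∀ i, IsEmpty (B i →ₐ[A] L)) :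
    ∃ (a : F) (V : ValuationSubring Ω) (hV : IsCenteredAt V a)
      (hA : ∀ x, algebraMap A L x ∈ V.comap (algebraMap L Ω)), (hV.constantMap L).Finite ∧
      ∀ i (ψ : B i →+* ResidueField (V.comap (algebraMap L Ω))),
        ψ.comp (algebraMap A (B i)) ≠ (residue _).comp ((algebraMap A L).codRestrict _ hA) := by
  classical
  have := Fintype.ofFinite ι
  obtain ⟨Z₀, hZ₀, hA⟩ := exists_finset_forall_algebraMap_mem k A Ω
  choose Z Z' hZ hZ' hψ using fun i => exists_finset_forall_comp_algebraMap_ne A (B i) L Ω (hB i)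
  let b := Module.finBasis E L
  have hb : LinearIndependent E fun i => algebraMap L Ω (b i) :=
    b.linearIndependent.map_injOn (IsScalarTower.toAlgHom E L Ω).toLinearMap
      (algebraMap L Ω).injective.injOn
  obtain ⟨a, V, hV, hbV, hVZ, hVZ'⟩ := hF.exists_isCenteredAt_isOrthonormal hb
    (Z := Z₀ ∪ Finset.univ.biUnion Z) (Z' := Finset.univ.biUnion Z') (by simp [hZ₀, hZ])
    (by simpa [mem_span_range_algebraMap_iff] using fun z i => hZ' i z)
  have hkV (c : k) : algebraMap k Ω c ∈ V := by
    rw [IsScalarTower.algebraMap_apply k F[X] Ω]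
    exact hV.algebraMap_mem _
  have hAV (x : A) : algebraMap A L x ∈ V.comap (algebraMap L Ω) := by
    rw [ValuationSubring.mem_comap, ← IsScalarTower.algebraMap_apply]
    exact hA V hkV (fun z hz => hVZ z (Finset.mem_union_left _ hz)) x
  refine ⟨a, V, hV, hAV, hV.finite_constantMap b hbV, fun i => hψ i V hAV (fun z hz => ?_) ?_⟩
  · exact hVZ z (Finset.mem_union_right _ (Finset.mem_biUnion.2 ⟨i, Finset.mem_univ i, hz⟩))
  · exact fun z hz y => hVZ' z (Finset.mem_biUnion.2 ⟨i, Finset.mem_univ i, hz⟩) _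
      ((mem_span_range_algebraMap_iff b).2 ⟨y, rfl⟩)

theorem HasIrreducibleSpecializations.exists_finite_ringHom_forall_comp_algebraMap_ne
    [CharZero F] {L : Type*} [Field L] [Algebra k L] [Algebra A L] [IsScalarTower k A L]
    [Algebra (RatFunc F) L] [IsScalarTower k (RatFunc F) L] [FiniteDimensional (RatFunc F) L]
    (hF : HasIrreducibleSpecializations F) (hB : ∀ i, IsEmpty (B i →ₐ[A] L)) :
    ∃ (W : ValuationSubring L) (κ : F →+* ResidueField W) (φ : A →+* ResidueField W),
      κ.Finite ∧ φ.comp (algebraMap k A) = κ.comp (algebraMap k F) ∧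
      ∀ i (ψ : B i →+* ResidueField W), ψ.comp (algebraMap A (B i)) ≠ φ := by
  let E := RatFunc F
  let Ω := AlgebraicClosure L
  let _ : Algebra F[X] L := ((algebraMap E L).comp (algebraMap F[X] E)).toAlgebra
  have : IsScalarTower F[X] E L := .of_algebraMap_eq' rfl
  have halgE : Algebra.IsAlgebraic E Ω := Algebra.IsAlgebraic.trans E L Ω
  have halg : Algebra.IsAlgebraic F[X] Ω := (IsFractionRing.comap_isAlgebraic_iff (K := E)).2 halgE
  have hfaithful : FaithfulSMul F[X] Ω := (faithfulSMul_iff_algebraMap_injective F[X] Ω).2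
    ((algebraMap E Ω).injective.comp (IsFractionRing.injective F[X] E))
  have hcharE : CharZero E := charZero_of_injective_algebraMap (algebraMap F E).injective
  have : IsScalarTower k F[X] L := .to₁₂₄ k F[X] E L
  have : IsScalarTower k F[X] Ω := .to₁₂₄ k F[X] L Ω
  obtain ⟨a, V, hV, hA, hfin, hψ⟩ :=
    hF.exists_isCenteredAt_forall_comp_algebraMap_ne k (E := E) (L := L) (Ω := Ω) B hB
  refine ⟨V.comap (algebraMap L Ω), hV.constantMap L, _, hfin, ?_, hψ⟩
  refine RingHom.ext fun c => congrArg (residue _) (Subtype.ext ?_)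
  change algebraMap A L (algebraMap k A c) = algebraMap F[X] L (C (algebraMap k F c))
  rw [← IsScalarTower.algebraMap_apply k A L, IsScalarTower.algebraMap_apply k F[X] L]
  rfl

end FiniteSpecialization

end Specialization

section FinitelyGenerated

theorem exists_algebra_ratFunc {F K : Type*} [Field F] [Field K] [Algebra F K] {x : K}
    (hx : Transcendental F x) :
    ∃ _ : Algebra (RatFunc F) K, IsScalarTower F (RatFunc F) K ∧
      algebraMap (RatFunc F) K RatFunc.X = x := by
  let e := (IntermediateField.val _).comp (RatFunc.algEquivOfTranscendental x hx).toAlgHom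
  let _ := e.toRingHom.toAlgebra
  exact ⟨inferInstance, .of_algebraMap_eq fun c => (e.commutes c).symm,
    RatFunc.algEquivOfTranscendental_X x hx⟩

universe u

variable {k K : Type u} [Field k] [Field K] [Algebra k K]
  {P : ∀ (F : Type u) [Field F] [Algebra k F], Prop}

theorem exists_forall_isAlgebraic_of_ratFunc (hk : P k)
    (hstep : ∀ (F : Type u) [Field F] [Algebra k F], P F → P (RatFunc F)) (s : Finset K) :
    ∃ (F : Type u) (_ : Field F) (_ : Algebra k F) (_ : Algebra F K),
      IsScalarTower k F K ∧ P F ∧ ∀ x ∈ s, IsAlgebraic F x := by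
  classical
  induction s using Finset.induction_on with
  | empty => exact ⟨k, _, _, inferInstance, inferInstance, hk, by simp⟩
  | insert x s _ ih =>
    obtain ⟨F, _, _, _, _, hF, hs⟩ := ih
    by_cases hx : IsAlgebraic F x
    · exact ⟨F, _, _, _, ‹_›, hF, Finset.forall_mem_insert _ _ _ |>.2 ⟨hx, hs⟩⟩
    obtain ⟨_, _, rfl⟩ := exists_algebra_ratFunc hx
    exact ⟨RatFunc F, _, _, _, .to₁₃₄ k F _ K, hstep F hF, Finset.forall_mem_insert _ _ _ |>.2
      ⟨isAlgebraic_algebraMap _, fun y hy => (hs y hy).extendScalars (algebraMap F _).injective⟩⟩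

theorem exists_finiteDimensional_of_ratFunc [Algebra.EssFiniteType k K] (hk : P k)
    (hstep : ∀ (F : Type u) [Field F] [Algebra k F], P F → P (RatFunc F)) :
    ∃ (F : Type u) (_ : Field F) (_ : Algebra k F) (_ : Algebra F K),
      IsScalarTower k F K ∧ FiniteDimensional F K ∧ P F := by
  obtain ⟨s, hs⟩ := IntermediateField.fg_top k K
  obtain ⟨F, _, _, _, _, hF, hsF⟩ := exists_forall_isAlgebraic_of_ratFunc hk hstep s
  have hle : IntermediateField.adjoin k (s : Set K) ≤
      (algebraicClosure F K).restrictScalars k :=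
    IntermediateField.adjoin_le_iff.2 fun x hx => mem_algebraicClosure_iff.2 (hsF x hx)
  have halg : Algebra.IsAlgebraic F K :=
    ⟨fun x => mem_algebraicClosure_iff.1 (hle (hs ▸ IntermediateField.mem_top))⟩
  have hess : Algebra.EssFiniteType F K := .of_comp k F K
  exact ⟨F, _, _, _, ‹_›, Algebra.finite_of_essFiniteType_of_isAlgebraic, hF⟩

end FinitelyGenerated

section Points

universe u

variable {X Y : Scheme.{u}} {U : X.Opens}

theorem exists_SpecMap_comp_fromSpec_eq {L : Type u} [Field L] {t : Spec (.of L) ⟶ X}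
    (hU : IsAffineOpen U) {z : Spec (.of L)} (hz : t z ∈ U) :
    ∃ φ : Γ(X, U) →+* L, Spec.map (CommRingCat.ofHom φ) ≫ hU.fromSpec = t := by
  have hrange : Set.range t ⊆ Set.range hU.fromSpec := by
    rw [hU.range_fromSpec]
    rintro _ ⟨w, rfl⟩
    rwa [Subsingleton.elim (α := PrimeSpectrum L) w z]
  refine ⟨(Spec.preimage (IsOpenImmersion.lift hU.fromSpec t hrange)).hom, ?_⟩
  rw [CommRingCat.ofHom_hom, Spec.map_preimage, IsOpenImmersion.lift_fac]

variable (f : Y ⟶ X)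

theorem SpecMap_comp_fromSpec_comp_eq_iff {R : Type u} [CommRing R] {W : Y.Opens}
    (hU : IsAffineOpen U) (hW : IsAffineOpen W) (hle : W ≤ f ⁻¹ᵁ U) {ψ : Γ(Y, W) →+* R}
    {φ : Γ(X, U) →+* R} :
    (Spec.map (CommRingCat.ofHom ψ) ≫ hW.fromSpec) ≫ f =
        Spec.map (CommRingCat.ofHom φ) ≫ hU.fromSpec ↔
      ψ.comp (f.appLE U W hle).hom = φ := by
  rw [Category.assoc, ← IsAffineOpen.SpecMap_appLE_fromSpec f hU hW hle, ← Category.assoc,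
    cancel_mono, ← Spec.map_comp, Spec.map_injective.eq_iff]
  exact CommRingCat.hom_ext_iff

theorem exists_finite_affineOpens_exists_lift_iff [QuasiCompact f] (hU : IsAffineOpen U) :
    ∃ (ι : Type u) (_ : Finite ι) (W : ι → Y.affineOpens) (hW : ∀ i, (W i : Y.Opens) ≤ f ⁻¹ᵁ U),
      ∀ {L : Type u} [Field L] (φ : Γ(X, U) →+* L),
        (∃ s, s ≫ f = Spec.map (CommRingCat.ofHom φ) ≫ hU.fromSpec) ↔
          ∃ i, ∃ ψ : Γ(Y, W i) →+* L, ψ.comp (f.appLE U (W i) (hW i)).hom = φ := by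
  obtain ⟨S, hS, hSU⟩ := isCompact_iff_finite_and_eq_biUnion_affineOpens.1
    (f.isCompact_preimage hU.isCompact)
  have hle (i : S) : (i.1 : Y.Opens) ≤ f ⁻¹ᵁ U := hSU ▸ le_iSup₂_of_le i.1 i.2 le_rfl
  refine ⟨S, hS, (↑), hle, fun {L _} φ => ⟨?_, ?_⟩⟩
  · rintro ⟨s, hs⟩
    obtain ⟨z⟩ : Nonempty (Spec (.of L)) := inferInstance
    have hz : s z ∈ f ⁻¹ᵁ U := by
      change f (s z) ∈ U
      rw [← Scheme.Hom.comp_apply, hs, Scheme.Hom.comp_apply, ← SetLike.mem_coe,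
        ← hU.range_fromSpec]
      exact Set.mem_range_self _
    simp only [hSU, TopologicalSpace.Opens.mem_iSup] at hz
    obtain ⟨W, hWS, hzW⟩ := hz
    obtain ⟨ψ, rfl⟩ := exists_SpecMap_comp_fromSpec_eq W.2 hzW
    exact ⟨⟨W, hWS⟩, ψ, (SpecMap_comp_fromSpec_comp_eq_iff f hU W.2 (hle ⟨W, hWS⟩)).1 hs⟩
  · rintro ⟨i, ψ, hψ⟩
    exact ⟨_, (SpecMap_comp_fromSpec_comp_eq_iff f hU i.1.2 (hle i)).2 hψ⟩

variable {k : Type u} [CommRing k] (p : X ⟶ Spec (.of k))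

/-- The `k`-algebra structure on the sections over an affine open subset of a `k`-scheme. -/
noncomputable def sectionsMap (hU : IsAffineOpen U) : k →+* Γ(X, U) :=
  (Spec.preimage (hU.fromSpec ≫ p)).hom

theorem SpecMap_sectionsMap (hU : IsAffineOpen U) :
    Spec.map (CommRingCat.ofHom (sectionsMap p hU)) = hU.fromSpec ≫ p := by
  rw [sectionsMap, CommRingCat.ofHom_hom, Spec.map_preimage]

theorem finiteType_sectionsMap [LocallyOfFiniteType p] (hU : IsAffineOpen U) :
    (sectionsMap p hU).FiniteType := by
  have : LocallyOfFiniteType (Spec.map (CommRingCat.ofHom (sectionsMap p hU))) := by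
    rw [SpecMap_sectionsMap]
    infer_instance
  exact (HasRingHomProperty.Spec_iff (P := @LocallyOfFiniteType)).1 this

theorem SpecMap_comp_fromSpec_comp_eq_SpecMap_iff {R : Type u} [CommRing R] (hU : IsAffineOpen U)
    {φ : Γ(X, U) →+* R} {j : k →+* R} :
    (Spec.map (CommRingCat.ofHom φ) ≫ hU.fromSpec) ≫ p = Spec.map (CommRingCat.ofHom j) ↔
      φ.comp (sectionsMap p hU) = j := by
  rw [Category.assoc, ← SpecMap_sectionsMap, ← Spec.map_comp, Spec.map_injective.eq_iff]
  exact CommRingCat.hom_ext_iff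

end Points

section Lifting

variable {k : Type} [CommRing k] {X Y : Scheme} (p : X ⟶ Spec (.of k)) (f : Y ⟶ X)

/-- Every point of the `k`-scheme `X` with values in a finite extension of `F` lifts along `f`. -/
def LiftsFinitePoints (F : Type) [Field F] [Algebra k F] : Prop :=
  ∀ (L : Type) [Field L] [Algebra k L] [Algebra F L] [IsScalarTower k F L] [FiniteDimensional F L]
    (t : Spec (.of L) ⟶ X), t ≫ p = specOver k L → ∃ s, s ≫ f = t

variable {p f} in
theorem LiftsFinitePoints.ratFunc [LocallyOfFiniteType p] [LocallyOfFiniteType f] [QuasiCompact f]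
    [LocallyQuasiFinite f] {F : Type} [Field F] [CharZero F] [Algebra k F]
    (hF : HasIrreducibleSpecializations F) (hlift : LiftsFinitePoints p f F) :
    LiftsFinitePoints p f (RatFunc F) := by
  intro L _ _ _ _ _ t ht
  obtain ⟨z⟩ : Nonempty (Spec (.of L)) := inferInstance
  obtain ⟨U, hU, hzU, -⟩ := exists_isAffineOpen_mem_and_subset (X := X) (x := t z) (U := ⊤) trivial
  obtain ⟨φ, rfl⟩ := exists_SpecMap_comp_fromSpec_eq hU hzU
  obtain ⟨ι, _, W, hW, hιW⟩ := exists_finite_affineOpens_exists_lift_iff f hU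
  let _ : Algebra k Γ(X, U) := (sectionsMap p hU).toAlgebra
  let _ : Algebra Γ(X, U) L := φ.toAlgebra
  let _ (i : ι) : Algebra Γ(X, U) Γ(Y, W i) := (f.appLE U (W i) (hW i)).hom.toAlgebra
  have : Algebra.FiniteType k Γ(X, U) := finiteType_sectionsMap p hU
  have (i : ι) : Algebra.FiniteType Γ(X, U) Γ(Y, W i) :=
    LocallyOfFiniteType.finiteType_appLE f hU (W i).2 (hW i)
  have (i : ι) : Algebra.QuasiFinite Γ(X, U) Γ(Y, W i) :=
    LocallyQuasiFinite.quasiFinite_appLE hU (W i).2 (hW i)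
  have : IsScalarTower k Γ(X, U) L :=
    .of_algebraMap_eq' ((SpecMap_comp_fromSpec_comp_eq_SpecMap_iff p hU).1 ht).symm
  by_contra hφ
  have hempty (i : ι) : IsEmpty (Γ(Y, W i) →ₐ[Γ(X, U)] L) :=
    ⟨fun ψ => hφ ((hιW φ).2 ⟨i, ψ, ψ.comp_algebraMap⟩)⟩
  obtain ⟨V, κ, φ', hκ, hφ', hψ⟩ :=
    hF.exists_finite_ringHom_forall_comp_algebraMap_ne (k := k) (fun i => Γ(Y, W i)) hempty
  let _ := κ.toAlgebra
  let _ := (κ.comp (algebraMap k F)).toAlgebra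
  have : IsScalarTower k F (IsLocalRing.ResidueField V) := .of_algebraMap_eq' rfl
  have : FiniteDimensional F (IsLocalRing.ResidueField V) := hκ
  obtain ⟨i, ψ, hi⟩ := (hιW φ').1
    (hlift _ _ ((SpecMap_comp_fromSpec_comp_eq_SpecMap_iff p hU).2 hφ'))
  exact hψ i ψ hi

theorem liftsFinitePoints_self {k : Type} [Field k] {p : X ⟶ Spec (.of k)}
    (h : ∀ (L : Type) [Field L] [Algebra k L] [FiniteDimensional k L] (t : Spec (.of L) ⟶ X),
      t ≫ p = specOver k L → ∃ s, s ≫ f = t) : LiftsFinitePoints p f k := by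
  intro L _ instL instL' _ _ t ht
  obtain rfl : instL = instL' := Algebra.algebra_ext _ _ fun c =>
    RingHom.congr_fun (@IsScalarTower.algebraMap_eq k k L _ _ _ _ instL' instL _) c
  exact h L t ht

end Lifting

theorem stmt_3_general {k K : Type} [Field k] [CharZero k] [Field K] [Algebra k K]
    [Algebra.EssFiniteType k K] (hk : IsHilbertian k) {X Y : Scheme} (pX : X ⟶ Spec (.of k))
    (f : Y ⟶ X) [LocallyOfFiniteType pX] [LocallyOfFiniteType f] [QuasiCompact f]
    [LocallyQuasiFinite f]
    (hsurj : ∀ (h : Type) [Field h] [Algebra k h] [FiniteDimensional k h] (t : Spec (.of h) ⟶ X),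
      t ≫ pX = specOver k h → ∃ s, s ≫ f = t)
    (t : Spec (.of K) ⟶ X) (ht : t ≫ pX = specOver k K) : ∃ s, s ≫ f = t := by
  obtain ⟨F, _, _, _, _, _, hlift, -, -⟩ := exists_finiteDimensional_of_ratFunc (K := K)
    (P := fun F _ _ => LiftsFinitePoints pX f F ∧ HasIrreducibleSpecializations F ∧ CharZero F)
    ⟨liftsFinitePoints_self f hsurj, hk.hasIrreducibleSpecializations, ‹_›⟩
    fun F _ _ ⟨hlift, hF, _⟩ =>
      ⟨hlift.ratFunc hF, hF.ratFunc, charZero_of_injective_algebraMap (algebraMap F _).injective⟩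
  exact hlift K t ht

/--
Let `k` be a Hilbertian field of characteristic 0 and `f : Y ⟶ X` a
quasi-finite morphism (of finite type with finite fibers) of separated schemes of finite
type over `k`.  If `Y (h) → X (h)` is surjective for every finite field extension `h/k`,
then `Y (K) → X (K)` is surjective for every finitely generated field extension `K/k`.
Here `Z (L)` is the set of morphisms `Spec L ⟶ Z` of schemes over `k`.
-/
theorem stmt_3 (k : Type) [Field k] [CharZero k] (hk : IsHilbertian k)
    (X Y : Scheme) (pX : X ⟶ Spec (CommRingCat.of k)) (pY : Y ⟶ Spec (CommRingCat.of k))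
    (f : Y ⟶ X) (hf : f ≫ pX = pY)
    -- `X` and `Y` are separated and of finite type over `k`:
    (hXsep : IsSeparated pX) (hYsep : IsSeparated pY)
    (hXlft : LocallyOfFiniteType pX) (hXqc : QuasiCompact pX)
    (hYlft : LocallyOfFiniteType pY) (hYqc : QuasiCompact pY)
    -- `f` is quasi-finite, i.e. of finite type with finite fibers:
    (hflft : LocallyOfFiniteType f) (hfqc : QuasiCompact f)
    (hfib : ∀ x : X, (f.base ⁻¹' {x}).Finite)
    -- `Y (h) → X (h)` is surjective for every finite extension `h/k`:
    (hsurj : ∀ (h : Type) [Field h] [Algebra k h] [FiniteDimensional k h]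
      (t : Spec (CommRingCat.of h) ⟶ X), t ≫ pX = specOver k h →
      ∃ s : Spec (CommRingCat.of h) ⟶ Y, s ≫ pY = specOver k h ∧ s ≫ f = t) :
    -- then `Y (K) → X (K)` is surjective for every finitely generated extension `K/k`:
    ∀ (K : Type) [Field K] [Algebra k K],
      (∃ s : Finset K, IntermediateField.adjoin k (s : Set K) = ⊤) →
      ∀ t : Spec (CommRingCat.of K) ⟶ X, t ≫ pX = specOver k K →
        ∃ s : Spec (CommRingCat.of K) ⟶ Y, s ≫ pY = specOver k K ∧ s ≫ f = t := by
  intro K _ _ hK t ht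
  have : Algebra.EssFiniteType k K := IntermediateField.fg_top_iff.1 hK
  have : LocallyQuasiFinite f := .of_finite_preimage_singleton f hfib
  obtain ⟨s, rfl⟩ := stmt_3_general hk pX f
    (fun h _ _ _ t ht => (hsurj h t ht).imp fun s hs => hs.2) t ht
  exact ⟨s, by rw [← ht, ← hf, Category.assoc], rfl⟩
end

section
/- Let k be a Hilbertian field of characteristic 0, and let f : Y → X be a finite morphism of affine integral schemes of finite type over k, with X and Y having the same dimension (f dominant). Suppose that for every finite field extension h of k, the induced map Y(h) → X(h) on h-valued points is surjective. Then f is birational, i.e. the induced extension of function fields k(X) → k(Y) is an isomorphism. -/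
open Polynomial

/-!
By Noether normalisation `R`, hence `S`, is finite over a polynomial ring `A = k[t₁, …, tₙ]`.
Specialize `t` to a point of `kⁿ` at which the minimal polynomial over `A` of a primitive element
of `Frac S` over `Frac A` stays irreducible. Every field receiving `S` over that point then has
degree at least `[Frac S : Frac A]` over `k`, whereas a residue field of `R` over it has degree at
most `[Frac R : Frac A]`. Since the latter point lifts to `S`, `[Frac S : Frac R] = 1`.

Hilbert irreducibility in several parameters comes from Kronecker's substitution, once finitely
many monic polynomials over `k[t]` can be kept irreducible by one and the same specialization.
All of them have roots in one finite extension of `k(t)`; if the minimal polynomial of a primitive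
element of that extension stays irreducible, then for almost all `t₀` the powers of each root
remain linearly independent, so its minimal polynomial stays irreducible as well.
-/

theorem irreducible_comp_C_mul_X_add_C_iff {K : Type*} [Field K] {a : K} (ha : a ≠ 0) (b : K)
    (p : K[X]) : Irreducible (p.comp (C a * X + C b)) ↔ Irreducible p := by
  have := invertibleOfNonzero ha
  rw [← MulEquiv.irreducible_iff (algEquivCMulXAddC a b) (x := p)]
  simp [algEquivCMulXAddC, algEquivOfCompEqX, comp, aeval_def]

theorem exists_mul_add_mul_derivative_eq_C_s4 {A : Type*} [CommRing A] [IsDomain A]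
    [IsIntegrallyClosed A] [CharZero A] {G : A[X]} (hG : G.Monic) (hirr : Irreducible G) :
    ∃ D : A, D ≠ 0 ∧ ∃ u v : A[X], G * u + derivative G * v = C D := by
  let K := FractionRing A
  have : CharZero K := charZero_of_injective_algebraMap (IsFractionRing.injective A K)
  have hinj := IsFractionRing.injective A K
  have hsep : IsCoprime (G.map (algebraMap A K)) ((derivative G).map (algebraMap A K)) := by
    rw [← derivative_map]
    exact (hG.irreducible_iff_irreducible_map_fraction_map.1 hirr).separable
  obtain ⟨u, v, -, -, huv⟩ := exists_mul_add_mul_eq_C_resultant G (derivative G) le_rfl le_rfl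
    (.inl (hG.natDegree_pos_of_not_isUnit hirr.not_isUnit).ne')
  refine ⟨_, fun hres => resultant_ne_zero _ _ hsep ?_, u, v, huv⟩
  rw [natDegree_map_eq_of_injective hinj, natDegree_map_eq_of_injective hinj, resultant_map_map,
    hres, map_zero]

theorem exists_isCoprime_eval_C {k : Type*} [Field k] [Infinite k] {G : k[X][X]} (hG : G.Monic)
    {D : k[X]} (hD : D ≠ 0) : ∃ c : k, IsCoprime (G.eval (C c)) D := by
  let E := AlgebraicClosure k
  let fiber (τ : E) : E[X] := G.map (eval₂RingHom (algebraMap k E) τ)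
  have hfinite : (⋃ τ ∈ D.rootSet E, algebraMap k E ⁻¹' {x | (fiber τ).IsRoot x}).Finite :=
    (rootSet_finite D E).biUnion fun τ _ =>
      (finite_setOfPred_isRoot (hG.map _).ne_zero).preimage (algebraMap k E).injective.injOn
  obtain ⟨c, hc⟩ := hfinite.exists_notMem
  refine ⟨c, (isCoprime_iff_aeval_ne_zero_of_isAlgClosed k E _ _).2 fun τ => ?_⟩
  by_contra! ⟨hGτ, hDτ⟩
  refine hc (Set.mem_biUnion ((mem_rootSet_of_ne hD).2 hDτ) ?_)
  have hbase : algebraMap k E c = eval₂RingHom (algebraMap k E) τ (C c) := by simp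
  rw [Set.mem_preimage, Set.mem_ofPred_eq, IsRoot, eval_map, hbase, eval₂_at_apply]
  simpa [aeval_def] using hGτ

section AffineSubstitution

variable {A : Type*} [CommRing A] {G : A[X]} {D b : A}

theorem isCoprime_comp_C_mul_X_add_C (h : IsCoprime (G.eval b) D) :
    IsCoprime (G.comp (C D * X + C b)) (C D) := by
  have hdvd : C D ∣ G.comp (C D * X + C b) - C (G.eval b) := by
    have hsub := sub_dvd_eval_sub (C D * X + C b) (C b) (G.map C)
    rw [add_sub_cancel_right, eval_map, eval_map] at hsub
    simpa [comp] using (Dvd.intro _ rfl).trans hsub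
  obtain ⟨w, hw⟩ := hdvd
  rw [sub_eq_iff_eq_add'.1 hw]
  exact (h.map (C : A →+* A[X])).add_mul_left_left w

theorem separable_comp_C_mul_X_add_C {u v : A[X]} (huv : G * u + derivative G * v = C D)
    (h : IsCoprime (G.eval b) D) : (G.comp (C D * X + C b)).Separable := by
  have hF := isCoprime_comp_C_mul_X_add_C h
  have hD : C D = (G * u + derivative G * v).comp (C D * X + C b) := by rw [huv, C_comp]
  have hG' : IsCoprime (G.comp (C D * X + C b)) ((derivative G).comp (C D * X + C b)) := by
    rw [add_comp, mul_comp, mul_comp] at hD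
    exact (hD.subst (motive := IsCoprime _) hF).of_mul_add_left_right.of_mul_right_left
  have hder : derivative (G.comp (C D * X + C b)) = C D * (derivative G).comp (C D * X + C b) := by
    simp [derivative_comp]
  rw [Separable, hder]
  exact hF.mul_right hG'

variable [IsDomain A]

theorem isPrimitive_comp_C_mul_X_add_C (hG : G.Monic) (hD : D ≠ 0) (h : IsCoprime (G.eval b) D) :
    (G.comp (C D * X + C b)).IsPrimitive := by
  intro r hr
  have hlead : (G.comp (C D * X + C b)).leadingCoeff = D ^ G.natDegree := by
    rw [leadingCoeff_comp (by rw [natDegree_linear hD]; exact one_ne_zero), hG.leadingCoeff,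
      one_mul, leadingCoeff_linear hD]
  have hrD : C r ∣ C D ^ G.natDegree := by
    rw [← C_pow, ← hlead]
    exact _root_.map_dvd C ((C_dvd_iff_dvd_coeff _ _).1 hr _)
  exact isUnit_C.1 ((isCoprime_comp_C_mul_X_add_C h).pow_right.isUnit_of_dvd' hr hrD)

theorem irreducible_comp_C_mul_X_add_C [IsGCDMonoid A]
    (hG : G.Monic) (hirr : Irreducible G) (hD : D ≠ 0) (h : IsCoprime (G.eval b) D) :
    Irreducible (G.comp (C D * X + C b)) := by
  let K := FractionRing A
  rw [(isPrimitive_comp_C_mul_X_add_C hG hD h).irreducible_iff_irreducible_map_fraction_map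
    (K := K)]
  have hD' : algebraMap A K D ≠ 0 := by simpa using hD
  simpa [Polynomial.map_comp] using (irreducible_comp_C_mul_X_add_C_iff hD' (algebraMap A K b)
    (G.map (algebraMap A K))).2 (hG.irreducible_iff_irreducible_map_fraction_map.1 hirr)

end AffineSubstitution

/-- `IsHilbertian` asks for separability over the ring `k[t]`, not merely over `k(t)`. Substituting
`D * X + c` for `X`, with `D` the resultant of `G` and its derivative and `G(c)` prime to `D`,
achieves this. -/
theorem IsHilbertian.infinite_irreducible_map_evalRingHom {k : Type*} [Field k] [CharZero k]
    (hk : IsHilbertian k) {G : k[X][X]} (hG : G.Monic) (hirr : Irreducible G) :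
    {a : k | Irreducible (G.map (evalRingHom a))}.Infinite := by
  obtain ⟨D, hD, u, v, huv⟩ := exists_mul_add_mul_derivative_eq_C_s4 hG hirr
  obtain ⟨c, hc⟩ := exists_isCoprime_eval_C hG hD
  have hdeg : 0 < (G.comp (C D * X + C (C c))).natDegree := by
    rw [natDegree_comp, natDegree_linear hD, mul_one]
    exact hG.natDegree_pos_of_not_isUnit hirr.not_isUnit
  have hinf := hk _ (irreducible_comp_C_mul_X_add_C hG hirr hD hc)
    (separable_comp_C_mul_X_add_C huv hc) hdeg
  refine (hinf.sdiff (finite_setOfPred_isRoot hD)).mono ?_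
  rintro a ⟨ha, hDa⟩
  rw [Set.mem_ofPred_eq, ← irreducible_comp_C_mul_X_add_C_iff hDa c]
  simpa [Polynomial.map_comp] using ha

/-- A ring homomorphism `ψ` from an `A`-algebra `O` to a `k`-algebra `Ω` lies over the
specialization `ev : A → k` of the base ring when it restricts to `ev` on `A`. -/
def LiesOverSpecialization {A k O Ω : Type*} [CommRing A] [CommRing k] [CommRing O] [CommRing Ω]
    [Algebra A O] [Algebra k Ω] (ev : A →+* k) (ψ : O →+* Ω) : Prop :=
  ψ.comp (algebraMap A O) = (algebraMap k Ω).comp ev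

namespace LiesOverSpecialization

variable {A k O Ω : Type*} [CommRing A] [Field k] [CommRing O] [Field Ω] [Algebra A O]
  [Algebra k Ω] {ev : A →+* k} {ψ : O →+* Ω}

theorem apply_algebraMap (hψ : LiesOverSpecialization ev ψ) (a : A) :
    ψ (algebraMap A O a) = algebraMap k Ω (ev a) :=
  RingHom.congr_fun hψ a

theorem apply_smul (hψ : LiesOverSpecialization ev ψ) (a : A) (x : O) :
    ψ (a • x) = ev a • ψ x := by
  rw [Algebra.smul_def, Algebra.smul_def, map_mul, hψ.apply_algebraMap]

theorem apply_mem_span (hψ : LiesOverSpecialization ev ψ) {s : Set O} {x : O}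
    (hx : x ∈ Submodule.span A s) : ψ x ∈ Submodule.span k (ψ '' s) := by
  induction hx using Submodule.span_induction with
  | mem x hx => exact Submodule.subset_span (Set.mem_image_of_mem ψ hx)
  | zero => rw [map_zero]; exact zero_mem _
  | add x y _ _ hx hy => rw [map_add]; exact add_mem hx hy
  | smul a x _ hx => rw [hψ.apply_smul]; exact Submodule.smul_mem _ _ hx

theorem aeval_map_minpoly (hψ : LiesOverSpecialization ev ψ) (x : O) :
    aeval (ψ x) ((minpoly A x).map ev) = 0 := by
  rw [aeval_def, eval₂_map, ← hψ, ← hom_eval₂, ← aeval_def, minpoly.aeval, map_zero]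

theorem isIntegral_apply (hψ : LiesOverSpecialization ev ψ) {x : O} (hx : IsIntegral A x) :
    IsIntegral k (ψ x) :=
  ⟨_, (minpoly.monic hx).map ev, hψ.aeval_map_minpoly x⟩

theorem minpoly_eq_map (hψ : LiesOverSpecialization ev ψ) {x : O} (hx : IsIntegral A x)
    (hirr : Irreducible ((minpoly A x).map ev)) : minpoly k (ψ x) = (minpoly A x).map ev :=
  (minpoly.eq_of_irreducible_of_monic hirr (hψ.aeval_map_minpoly x)
    ((minpoly.monic hx).map ev)).symm

theorem natDegree_minpoly_le (hψ : LiesOverSpecialization ev ψ) {x : O} (hx : IsIntegral A x) :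
    (minpoly k (ψ x)).natDegree ≤ (minpoly A x).natDegree :=
  (natDegree_le_of_dvd (minpoly.dvd k _ (hψ.aeval_map_minpoly x))
    ((minpoly.monic hx).map ev).ne_zero).trans natDegree_map_le

end LiesOverSpecialization

section LinearIndependence

variable {A O K L : Type*} [CommRing A] [IsDomain A] [CommRing O] [Algebra A O] [Field K]
  [Algebra A K] [IsFractionRing A K] [Field L] [Algebra O L] [Algebra K L] [Algebra A L]
  [IsScalarTower A K L] [IsScalarTower A O L] [FaithfulSMul O L]

variable (A)

theorem exists_ne_zero_smul_mem_span {s : Set O} {x : O}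
    (hx : algebraMap O L x ∈ Submodule.span K (algebraMap O L '' s)) :
    ∃ D : A, D ≠ 0 ∧ D • x ∈ Submodule.span A s := by
  obtain ⟨y, hy, z, hxy⟩ := (IsLocalization.mem_span_iff (nonZeroDivisors A)).1 hx
  have hmap : algebraMap O L '' s = (IsScalarTower.toAlgHom A O L).toLinearMap '' s := rfl
  rw [hmap, ← Submodule.map_span] at hy
  obtain ⟨y, hy, rfl⟩ := hy
  have hzx : (z : A) • x = y := by
    apply FaithfulSMul.algebraMap_injective O L
    rw [Algebra.algebraMap_eq_smul_one, smul_assoc, ← Algebra.algebraMap_eq_smul_one, hxy,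
      ← algebraMap_smul K (z : A), smul_smul, IsLocalization.mul_mk'_eq_mk'_of_mul, mul_one,
      IsLocalization.mk'_self', one_smul]
    rfl
  exact ⟨z, nonZeroDivisors.coe_ne_zero z, hzx ▸ hy⟩

theorem exists_ne_zero_forall_smul_mem_span {κ : Type*} [Finite κ] (b : κ → O) {s : Set O}
    (hs : Submodule.span K (algebraMap O L '' s) = ⊤) :
    ∃ D : A, D ≠ 0 ∧ ∀ j, D • b j ∈ Submodule.span A s := by
  have := Fintype.ofFinite κ
  have hmem (j) : ∃ D : A, D ≠ 0 ∧ D • b j ∈ Submodule.span A s :=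
    exists_ne_zero_smul_mem_span A (hs ▸ Submodule.mem_top)
  choose D hD hDb using hmem
  refine ⟨∏ j, D j, Finset.prod_ne_zero_iff.2 fun j _ => hD j, fun j => ?_⟩
  obtain ⟨c, hc⟩ := Finset.dvd_prod_of_mem D (Finset.mem_univ j)
  rw [hc, mul_comm, mul_smul]
  exact Submodule.smul_mem _ _ (hDb j)

variable (k Ω : Type*) [Field k] [Field Ω] [Algebra k Ω] {ι κ : Type*} [Finite ι] [Finite κ]

theorem exists_linearIndependent_of_span_eq_top (b : κ → O) {w : ι → O}
    (hw : Submodule.span K (Set.range (algebraMap O L ∘ w)) = ⊤) (hcard : Nat.card ι ≤ Nat.card κ) :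
    ∃ D : A, D ≠ 0 ∧ ∀ (ev : A →+* k) (ψ : O →+* Ω), LiesOverSpecialization ev ψ → ev D ≠ 0 →
      LinearIndependent k (ψ ∘ b) → LinearIndependent k (ψ ∘ w) := by
  have := Fintype.ofFinite ι
  have := Fintype.ofFinite κ
  rw [Set.range_comp] at hw
  obtain ⟨D, hD, hDb⟩ := exists_ne_zero_forall_smul_mem_span A b hw
  refine ⟨D, hD, fun ev ψ hψ hevD hb => ?_⟩
  have hle : Submodule.span k (Set.range (ψ ∘ b)) ≤ Submodule.span k (Set.range (ψ ∘ w)) := by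
    rw [Submodule.span_le, Set.range_subset_iff]
    intro j
    have hmem := hψ.apply_mem_span (hDb j)
    rwa [hψ.apply_smul, Submodule.smul_mem_iff _ hevD, ← Set.range_comp] at hmem
  rw [linearIndependent_iff_card_le_finrank_span]
  have : FiniteDimensional k (Submodule.span k (Set.range (ψ ∘ w))) :=
    FiniteDimensional.span_of_finite k (Set.finite_range _)
  rw [Nat.card_eq_fintype_card, Nat.card_eq_fintype_card] at hcard
  calc Fintype.card ι ≤ Fintype.card κ := hcard
    _ = Set.finrank k (Set.range (ψ ∘ b)) := (linearIndependent_iff_card_eq_finrank_span.1 hb)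
    _ ≤ Set.finrank k (Set.range (ψ ∘ w)) := Submodule.finrank_mono hle

theorem exists_linearIndependent_of_linearIndependent {b : κ → O} {v : ι → O}
    (hb : Submodule.span K (Set.range (algebraMap O L ∘ b)) = ⊤)
    (hv : LinearIndependent K (algebraMap O L ∘ v)) :
    ∃ D : A, D ≠ 0 ∧ ∀ (ev : A →+* k) (ψ : O →+* Ω), LiesOverSpecialization ev ψ → ev D ≠ 0 →
      LinearIndependent k (ψ ∘ b) → LinearIndependent k (ψ ∘ v) := by
  have hinl : LinearIndepOn K (algebraMap O L ∘ Sum.elim v b) (Set.range Sum.inl) := by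
    rw [linearIndepOn_range_iff Sum.inl_injective]
    exact hv
  obtain ⟨u, -, hinlu, hspan, hu⟩ := exists_linearIndepOn_extension hinl (Set.subset_univ _)
  let w : u → O := fun i => Sum.elim v b i
  have hw : Submodule.span K (Set.range (algebraMap O L ∘ w)) = ⊤ := by
    rw [eq_top_iff, ← hb, Submodule.span_le]
    rintro _ ⟨j, rfl⟩
    have hj := hspan ⟨Sum.inr j, trivial, rfl⟩
    rwa [Set.image_eq_range] at hj
  have hcard : Nat.card u ≤ Nat.card κ := by
    have := Fintype.ofFinite u
    have := Fintype.ofFinite κ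
    have : FiniteDimensional K L :=
      Module.finite_def.2 (hb ▸ Submodule.fg_span (Set.finite_range _))
    rw [Nat.card_eq_fintype_card, Nat.card_eq_fintype_card]
    refine hu.fintype_card_le_finrank.trans ?_
    rw [← finrank_top K L, ← hb]
    exact finrank_range_le_card _
  obtain ⟨D, hD, h⟩ := exists_linearIndependent_of_span_eq_top A k Ω b hw hcard
  refine ⟨D, hD, fun ev ψ hψ hevD hψb => ?_⟩
  exact (h ev ψ hψ hevD hψb).comp (fun i => ⟨Sum.inl i, hinlu ⟨i, rfl⟩⟩)
    fun i j hij => Sum.inl_injective (congrArg Subtype.val hij)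

end LinearIndependence

theorem le_natDegree_minpoly_of_linearIndependent_pow {k E : Type*} [Field k] [Field E]
    [Algebra k E] {y : E} (hy : IsIntegral k y) {d : ℕ}
    (h : LinearIndependent k fun i : Fin d => y ^ (i : ℕ)) : d ≤ (minpoly k y).natDegree := by
  have := IntermediateField.adjoin.finiteDimensional hy
  have hgen : LinearIndependent k
      fun i : Fin d => IntermediateField.AdjoinSimple.gen k y ^ (i : ℕ) :=
    .of_comp (IntermediateField.val _).toLinearMap (by simpa [Function.comp_def] using h)
  simpa [IntermediateField.adjoin.finrank hy] using hgen.fintype_card_le_finrank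

section IntegralElement

variable {A O K L : Type*} [CommRing A] [IsDomain A] [IsIntegrallyClosed A] [CommRing O]
  [IsDomain O] [Algebra A O] [Field K] [Algebra A K] [IsFractionRing A K] [Field L] [Algebra O L]
  [Algebra K L] [Algebra A L] [IsScalarTower A K L] [IsScalarTower A O L]
  {x θ : O}

theorem natDegree_minpoly_algebraMap (hx : IsIntegral A x) :
    (minpoly K (algebraMap O L x)).natDegree = (minpoly A x).natDegree := by
  rw [minpoly.isIntegrallyClosed_eq_field_fractions K L hx, (minpoly.monic hx).natDegree_map]

theorem linearIndependent_algebraMap_comp_pow (hx : IsIntegral A x) :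
    LinearIndependent K
      (algebraMap O L ∘ fun i : Fin (minpoly A x).natDegree => x ^ (i : ℕ)) := by
  have hpow := linearIndependent_pow (K := K) (algebraMap O L x)
  rw [natDegree_minpoly_algebraMap hx] at hpow
  simpa [Function.comp_def] using hpow

theorem exists_irreducible_map_minpoly_of_adjoin_eq_top [FaithfulSMul O L]
    [FiniteDimensional K L] (k Ω : Type*) [Field k] [Field Ω] [Algebra k Ω]
    (hθ : IsIntegral A θ) (hx : IsIntegral A x)
    (htop : IntermediateField.adjoin K {algebraMap O L θ} = ⊤) :
    ∃ D : A, D ≠ 0 ∧ ∀ (ev : A →+* k) (ψ : O →+* Ω), LiesOverSpecialization ev ψ → ev D ≠ 0 →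
      Irreducible ((minpoly A θ).map ev) → Irreducible ((minpoly A x).map ev) := by
  have hspan : Submodule.span K (Set.range
      (algebraMap O L ∘ fun i : Fin (minpoly A θ).natDegree => θ ^ (i : ℕ))) = ⊤ := by
    refine (linearIndependent_algebraMap_comp_pow hθ).span_eq_top_of_card_eq_finrank' ?_
    rw [Fintype.card_fin, ← natDegree_minpoly_algebraMap (K := K) (L := L) hθ]
    exact (Field.primitive_element_iff_minpoly_natDegree_eq K _).1 htop
  obtain ⟨D, hD, hLI⟩ := exists_linearIndependent_of_linearIndependent A k Ω hspan
    (linearIndependent_algebraMap_comp_pow hx)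
  refine ⟨D, hD, fun ev ψ hψ hevD hirr => ?_⟩
  have hψx := hψ.isIntegral_apply hx
  have hpowθ : LinearIndependent k
      (ψ ∘ fun i : Fin (minpoly A θ).natDegree => θ ^ (i : ℕ)) := by
    have hpow := linearIndependent_pow (K := k) (ψ θ)
    rw [hψ.minpoly_eq_map hθ hirr, (minpoly.monic hθ).natDegree_map] at hpow
    simpa [Function.comp_def] using hpow
  have hdeg : (minpoly A x).natDegree ≤ (minpoly k (ψ x)).natDegree :=
    le_natDegree_minpoly_of_linearIndependent_pow hψx
      (by simpa [Function.comp_def] using hLI ev ψ hψ hevD hpowθ)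
  have heq : (minpoly A x).map ev = minpoly k (ψ x) :=
    eq_of_monic_of_dvd_of_natDegree_le (minpoly.monic hψx) ((minpoly.monic hx).map ev)
      (minpoly.dvd k _ (hψ.aeval_map_minpoly x)) (by rwa [(minpoly.monic hx).natDegree_map])
  exact heq ▸ minpoly.irreducible hψx

end IntegralElement

theorem exists_liesOverSpecialization {A k O : Type*} [CommRing A] [Field k] [CommRing O]
    [Algebra A O] [Algebra.IsIntegral A O] [FaithfulSMul A O] (ev : A →+* k) :
    ∃ ψ : O →+* AlgebraicClosure k, LiesOverSpecialization ev ψ := by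
  let P := RingHom.ker ev
  have : P.IsPrime := RingHom.ker_isPrime ev
  have hker : (⊥ : Ideal O).comap (algebraMap A O) ≤ P := by
    rw [Ideal.comap_bot_of_injective _ (FaithfulSMul.algebraMap_injective A O)]
    exact bot_le
  obtain ⟨Q, -, hQ, hQP⟩ := Ideal.exists_ideal_over_prime_of_isIntegral P ⊥ hker
  have : Q.LiesOver P := ⟨hQP.symm⟩
  algebraize [(algebraMap k (AlgebraicClosure k)).comp (RingHom.kerLift ev)]
  have : FaithfulSMul (A ⧸ P) (AlgebraicClosure k) := (faithfulSMul_iff_algebraMap_injective _ _).2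
    ((algebraMap k _).injective.comp (RingHom.kerLift_injective ev))
  have : Module.IsTorsionFree (A ⧸ P) (O ⧸ Q) := .trans_faithfulSMul _ (O ⧸ Q) _
  let lift : O ⧸ Q →ₐ[A ⧸ P] AlgebraicClosure k := IsAlgClosed.lift
  exact ⟨lift.toRingHom.comp (Ideal.Quotient.mk Q),
    RingHom.ext fun a => lift.commutes (Ideal.Quotient.mk P a)⟩

theorem exists_adjoin_algebraMap_eq_top (A O K L : Type*) [CommRing A] [CommRing O]
    [IsDomain O] [Algebra A O] [Algebra.IsAlgebraic A O] [Field K] [Algebra A K]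
    [IsFractionRing A K] [Field L] [Algebra O L] [IsFractionRing O L] [Algebra K L] [Algebra A L]
    [IsScalarTower A K L] [IsScalarTower A O L] [FiniteDimensional K L]
    [Algebra.IsSeparable K L] :
    ∃ θ : O, IntermediateField.adjoin K {algebraMap O L θ} = ⊤ := by
  obtain ⟨x, hx⟩ := Field.exists_primitive_element K L
  obtain ⟨a, s, hs, rfl⟩ := IsFractionRing.div_surjective (A := O) x
  obtain ⟨θ, d, hd, hdθ⟩ :=
    Algebra.IsAlgebraic.exists_smul_eq_mul A a (nonZeroDivisors.ne_zero hs)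
  refine ⟨θ, ?_⟩
  rw [eq_top_iff, ← hx, IntermediateField.adjoin_simple_le_iff]
  have hs0 : algebraMap O L s ≠ 0 := by simpa using nonZeroDivisors.ne_zero hs
  have hd0 : algebraMap A K d ≠ 0 := by simpa using hd
  have hquot : algebraMap O L a / algebraMap O L s = (algebraMap A K d)⁻¹ • algebraMap O L θ := by
    rw [eq_inv_smul_iff₀ hd0, algebraMap_smul, ← smul_div_assoc, div_eq_iff hs0, mul_comm,
      ← map_mul, ← hdθ, Algebra.smul_def, Algebra.smul_def, map_mul,
      ← IsScalarTower.algebraMap_apply]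
  rw [hquot]
  exact IntermediateField.smul_mem _ (IntermediateField.mem_adjoin_simple_self K _)

theorem minpoly_eq_of_irreducible_of_monic {A O : Type*} [CommRing A] [IsDomain A]
    [IsIntegrallyClosed A] [CommRing O] [IsDomain O] [Algebra A O] [Module.IsTorsionFree A O]
    {q : A[X]} {x : O} (hq : q.Monic) (hirr : Irreducible q) (hx : aeval x q = 0) :
    minpoly A x = q := by
  have hint : IsIntegral A x := ⟨q, hq, hx⟩
  exact eq_of_monic_of_associated (minpoly.monic hint) hq
    ((minpoly.irreducible hint).associated_of_dvd hirr (minpoly.isIntegrallyClosed_dvd hint hx))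

theorem exists_minpoly_integralClosure_eq {A L : Type*} [CommRing A] [IsDomain A]
    [IsIntegrallyClosed A] [Field L] [Algebra A L] [FaithfulSMul A L] {q : A[X]} (hq : q.Monic)
    (hirr : Irreducible q) (hsplits : (q.map (algebraMap A L)).Splits) :
    ∃ x : integralClosure A L, minpoly A x = q := by
  have hdeg : (q.map (algebraMap A L)).degree ≠ 0 := by
    rw [hq.degree_map]
    exact (hq.degree_pos_of_not_isUnit hirr.not_isUnit).ne'
  obtain ⟨y, hy⟩ := hsplits.exists_eval_eq_zero hdeg
  rw [eval_map_algebraMap] at hy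
  have : FaithfulSMul A (integralClosure A L) := .tower_bot A _ L
  let x : integralClosure A L := ⟨y, q, hq, hy⟩
  exact ⟨x, minpoly_eq_of_irreducible_of_monic hq hirr
    ((aeval_algebraMap_eq_zero_iff L x q).1 hy)⟩

theorem exists_monic_irreducible_forall_irreducible_map {A : Type*} [CommRing A] [IsDomain A]
    [IsIntegrallyClosed A] [CharZero A] (k : Type*) [Field k] {s : Finset A[X]}
    (hs : ∀ q ∈ s, q.Monic ∧ Irreducible q) :
    ∃ Θ : A[X], Θ.Monic ∧ Irreducible Θ ∧ ∃ D : A, D ≠ 0 ∧ ∀ ev : A →+* k, ev D ≠ 0 →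
      Irreducible (Θ.map ev) → ∀ q ∈ s, Irreducible (q.map ev) := by
  let K := FractionRing A
  let L := (∏ q ∈ s, q.map (algebraMap A K)).SplittingField
  let O := integralClosure A L
  have : CharZero K := charZero_of_injective_algebraMap (IsFractionRing.injective A K)
  have : IsFractionRing O L := integralClosure.isFractionRing_of_finite_extension K L
  have : FaithfulSMul A L := .trans A K L
  have : FaithfulSMul A O := .tower_bot A O L
  obtain ⟨θ, hθ⟩ := exists_adjoin_algebraMap_eq_top A O K L
  have hsplits : ∀ q ∈ s, (q.map (algebraMap A L)).Splits := by
    refine (splits_prod_iff fun q hq => ((hs q hq).1.map _).ne_zero).1 ?_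
    simpa only [Polynomial.map_prod, Polynomial.map_map, ← IsScalarTower.algebraMap_eq]
      using SplittingField.splits (∏ q ∈ s, q.map (algebraMap A K))
  have hroot (q : s) : ∃ x : O, minpoly A x = q :=
    exists_minpoly_integralClosure_eq (hs q q.2).1 (hs q q.2).2 (hsplits q q.2)
  choose x hx using hroot
  have hint (y : O) : IsIntegral A y := Algebra.IsIntegral.isIntegral y
  choose D hD h using fun q => exists_irreducible_map_minpoly_of_adjoin_eq_top k
    (AlgebraicClosure k) (hint θ) (hint (x q)) hθ
  refine ⟨minpoly A θ, minpoly.monic (hint θ), minpoly.irreducible (hint θ), ∏ q, D q,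
    Finset.prod_ne_zero_iff.2 fun q _ => hD q, fun ev hev hirr q hq => ?_⟩
  obtain ⟨ψ, hψ⟩ := exists_liesOverSpecialization (O := O) ev
  rw [map_prod, Finset.prod_ne_zero_iff] at hev
  have := h ⟨q, hq⟩ ev ψ hψ (hev _ (Finset.mem_univ _)) hirr
  rwa [hx] at this

theorem IsHilbertian.infinite_forall_irreducible_map_evalRingHom {k : Type*} [Field k] [CharZero k]
    (hk : IsHilbertian k) {s : Finset k[X][X]} (hs : ∀ q ∈ s, q.Monic ∧ Irreducible q) :
    {a : k | ∀ q ∈ s, Irreducible (q.map (evalRingHom a))}.Infinite := by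
  obtain ⟨Θ, hΘ, hirr, D, hD, h⟩ := exists_monic_irreducible_forall_irreducible_map k hs
  refine ((hk.infinite_irreducible_map_evalRingHom hΘ hirr).sdiff
    (finite_setOfPred_isRoot hD)).mono ?_
  rintro a ⟨ha, hDa⟩
  exact h (evalRingHom a) hDa ha

section KroneckerSubstitution

variable {σ : Type*} (A : Type*) [CommRing A] (w : σ → ℕ)

/-- Kronecker's substitution `Xᵢ ↦ X ^ wᵢ`, which turns a polynomial in several variables into a
polynomial in one variable. -/
noncomputable def kroneckerSubst : MvPolynomial σ A →ₐ[A] A[X] :=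
  MvPolynomial.aeval fun i => X ^ w i

/-- The inverse of Kronecker's substitution on polynomials of total degree less than `e`, provided
the weight of a monomial of degree less than `e` determines the monomial. Powers of `X` which are
not the weight of such a monomial are sent to an arbitrary monomial. -/
noncomputable def kroneckerUnsubst (e : ℕ) : A[X] →ₗ[A] MvPolynomial σ A :=
  Polynomial.lsum fun j =>
    MvPolynomial.monomial (Function.invFunOn (Finsupp.weight w) {m | m.degree < e} j)

variable {A}

theorem kroneckerSubst_monomial (m : σ →₀ ℕ) (c : A) :
    kroneckerSubst A w (MvPolynomial.monomial m c) = monomial (Finsupp.weight w m) c := by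
  have hprod : (m.prod fun i j => (X ^ w i) ^ j : A[X]) = X ^ Finsupp.weight w m := by
    simp only [← pow_mul, Finsupp.weight_apply, Finsupp.prod, Finsupp.sum,
      Finset.prod_pow_eq_pow_sum, smul_eq_mul, mul_comm]
  rw [kroneckerSubst, MvPolynomial.aeval_monomial, hprod, algebraMap_eq, C_mul_X_pow_eq_monomial]

theorem kroneckerUnsubst_monomial (e j : ℕ) (c : A) :
    kroneckerUnsubst A w e (monomial j c) =
      MvPolynomial.monomial (Function.invFunOn (Finsupp.weight w) {m | m.degree < e} j) c := by
  simp [kroneckerUnsubst]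

theorem kroneckerSubst_eq_sum (P : MvPolynomial σ A) :
    kroneckerSubst A w P = ∑ m ∈ P.support, monomial (Finsupp.weight w m) (P.coeff m) := by
  conv_lhs => rw [P.as_sum]
  simp only [map_sum, kroneckerSubst_monomial]

variable {w}

theorem kroneckerUnsubst_kroneckerSubst {e : ℕ}
    (hw : Set.InjOn (Finsupp.weight w) {m | m.degree < e}) {P : MvPolynomial σ A}
    (hP : P.totalDegree < e) : kroneckerUnsubst A w e (kroneckerSubst A w P) = P := by
  conv_rhs => rw [P.as_sum]
  rw [kroneckerSubst_eq_sum, map_sum]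
  refine Finset.sum_congr rfl fun m hm => ?_
  have hdeg : m ∈ {m : σ →₀ ℕ | m.degree < e} :=
    (MvPolynomial.le_totalDegree hm).trans_lt hP
  rw [kroneckerUnsubst_monomial, hw.leftInvOn_invFunOn hdeg]

theorem kroneckerSubst_injOn {e : ℕ} (hw : Set.InjOn (Finsupp.weight w) {m | m.degree < e}) :
    Set.InjOn (kroneckerSubst A w) {P | P.totalDegree < e} :=
  Set.LeftInvOn.injOn (f₁' := kroneckerUnsubst A w e) fun _ hP =>
    kroneckerUnsubst_kroneckerSubst hw hP

variable {B : Type*} [CommRing B] (f : A →+* B)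

theorem kroneckerSubst_map (P : MvPolynomial σ A) :
    kroneckerSubst B w (MvPolynomial.map f P) = (kroneckerSubst A w P).map f := by
  induction P using MvPolynomial.induction_on' with
  | monomial m c => simp only [MvPolynomial.map_monomial, kroneckerSubst_monomial, map_monomial]
  | add P Q hP hQ => simp only [map_add, Polynomial.map_add, hP, hQ]

theorem kroneckerUnsubst_map (e : ℕ) (p : A[X]) :
    kroneckerUnsubst B w e (p.map f) = MvPolynomial.map f (kroneckerUnsubst A w e p) := by
  induction p using Polynomial.induction_on' with
  | monomial j c => simp only [map_monomial, kroneckerUnsubst_monomial, MvPolynomial.map_monomial]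
  | add p q hp hq => simp only [map_add, Polynomial.map_add, hp, hq]

theorem monic_kroneckerSubst {P : MvPolynomial σ A} {m₀ : σ →₀ ℕ} (hm₀ : P.coeff m₀ = 1)
    (hlt : ∀ m ∈ P.support, m ≠ m₀ → Finsupp.weight w m < Finsupp.weight w m₀) :
    (kroneckerSubst A w P).Monic := by
  classical
  nontriviality A
  have hmem : m₀ ∈ P.support := by simp [hm₀]
  rw [kroneckerSubst_eq_sum, ← Finset.add_sum_erase _ _ hmem, hm₀, monomial_one_right_eq_X_pow]
  refine monic_X_pow_add (mem_degreeLT.1 (Submodule.sum_mem _ fun m hm => mem_degreeLT.2 ?_))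
  obtain ⟨hne, hm⟩ := Finset.mem_erase.1 hm
  exact (degree_monomial_le _ _).trans_lt (by exact_mod_cast hlt m hm hne)

end KroneckerSubstitution

section KroneckerWeight

/-- Weights for which the weight of an exponent vector with entries less than `e` is the number
with these entries as its base `e` digits. The variable `0` gets the most significant digit. -/
def kroneckerWeight (e n : ℕ) (i : Fin n) : ℕ :=
  e ^ (i.rev : ℕ)

variable {e n : ℕ}

theorem weight_kroneckerWeight {m : Fin n →₀ ℕ} (hm : ∀ i, m i < e) :
    Finsupp.weight (kroneckerWeight e n) m =
      finFunctionFinEquiv fun i : Fin n => (⟨m i.rev, hm _⟩ : Fin e) := by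
  rw [finFunctionFinEquiv_apply, Finsupp.weight_apply, Finsupp.sum_fintype _ _ (by simp),
    ← Equiv.sum_comp Fin.revPerm]
  simp [kroneckerWeight]

theorem weight_kroneckerWeight_lt {m : Fin n →₀ ℕ} (hm : ∀ i, m i < e) :
    Finsupp.weight (kroneckerWeight e n) m < e ^ n := by
  rw [weight_kroneckerWeight hm]
  exact Fin.is_lt _

theorem injOn_weight_kroneckerWeight :
    Set.InjOn (Finsupp.weight (kroneckerWeight e n)) {m | m.degree < e} := by
  intro m hm m' hm' h
  rw [weight_kroneckerWeight fun i => (Finsupp.le_degree i m).trans_lt hm,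
    weight_kroneckerWeight fun i => (Finsupp.le_degree i m').trans_lt hm', Fin.val_inj,
    finFunctionFinEquiv.apply_eq_iff_eq] at h
  ext i
  simpa using congrFun h i.rev

theorem weight_kroneckerWeight_cons (i : ℕ) (m : Fin n →₀ ℕ) :
    Finsupp.weight (kroneckerWeight e (n + 1)) (m.cons i) =
      i * e ^ n + Finsupp.weight (kroneckerWeight e n) m := by
  simp [Finsupp.weight_apply, Finsupp.sum_fintype, Fin.sum_univ_succ, kroneckerWeight]

theorem monic_kroneckerSubst_finSuccEquiv_symm {A : Type*} [CommRing A]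
    {G : (MvPolynomial (Fin n) A)[X]} (hG : G.Monic)
    (he : ((MvPolynomial.finSuccEquiv A n).symm G).totalDegree < e) :
    (kroneckerSubst A (kroneckerWeight e (n + 1))
      ((MvPolynomial.finSuccEquiv A n).symm G)).Monic := by
  set P := (MvPolynomial.finSuccEquiv A n).symm G with hP
  have hcoeff (i : ℕ) (m : Fin n →₀ ℕ) : P.coeff (m.cons i) = (G.coeff i).coeff m := by
    rw [← MvPolynomial.finSuccEquiv_coeff_coeff, hP, AlgEquiv.apply_symm_apply]
  refine monic_kroneckerSubst (m₀ := Finsupp.cons G.natDegree 0) (by simp [hcoeff, hG]) ?_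
  intro m hm hne
  obtain ⟨i, m, rfl⟩ : ∃ i m', m = Finsupp.cons i m' := ⟨_, _, (Finsupp.cons_tail m).symm⟩
  have hdigits (j) : m j < e := by
    simpa using (Finsupp.le_degree j.succ (m.cons i)).trans_lt
      ((MvPolynomial.le_totalDegree hm).trans_lt he)
  rw [MvPolynomial.mem_support_iff, hcoeff] at hm
  have hi : i < G.natDegree := by
    refine (le_natDegree_of_ne_zero fun h => hm (by simp [h])).lt_of_ne ?_
    rintro rfl
    rw [hG.coeff_natDegree, MvPolynomial.coeff_one] at hm
    exact hne (by rw [← (ite_ne_right_iff.1 hm).1])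
  rw [weight_kroneckerWeight_cons, weight_kroneckerWeight_cons, map_zero, add_zero]
  calc i * e ^ n + Finsupp.weight (kroneckerWeight e n) m
      < (i + 1) * e ^ n := by
        rw [add_one_mul]
        exact Nat.add_lt_add_left (weight_kroneckerWeight_lt hdigits) _
    _ ≤ G.natDegree * e ^ n := Nat.mul_le_mul_right _ hi

end KroneckerWeight

theorem exists_multiset_prod_eq_of_monic {A : Type*} [CommRing A] [IsDomain A] {Q : A[X]}
    (hQ : Q.Monic) : ∃ s : Multiset A[X], (∀ q ∈ s, q.Monic ∧ Irreducible q) ∧ s.prod = Q := by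
  induction hd : Q.natDegree using Nat.strong_induction_on generalizing Q with
  | _ d ih =>
    subst hd
    by_cases hQ1 : Q = 1
    · exact ⟨0, by simp, by simp [hQ1]⟩
    by_cases hirr : Irreducible Q
    · exact ⟨{Q}, by simp [hQ, hirr], by simp⟩
    rw [irreducible_of_monic hQ hQ1] at hirr
    push Not at hirr
    obtain ⟨f, g, hf, hg, rfl, hf1, hg1⟩ := hirr
    have hdeg := hf.natDegree_mul hg
    have hf0 := mt hf.natDegree_eq_zero.1 hf1
    have hg0 := mt hg.natDegree_eq_zero.1 hg1
    obtain ⟨s, hs, rfl⟩ := ih f.natDegree (by lia) hf rfl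
    obtain ⟨t, ht, rfl⟩ := ih g.natDegree (by lia) hg rfl
    refine ⟨s + t, fun q hq => ?_, Multiset.prod_add s t⟩
    exact (Multiset.mem_add.1 hq).elim (hs q) (ht q)

theorem eq_C_mul_kroneckerUnsubst {σ A : Type*} [CommRing A] {w : σ → ℕ} {e : ℕ}
    (hw : Set.InjOn (Finsupp.weight w) {m | m.degree < e}) {f : MvPolynomial σ A}
    (hf : f.totalDegree < e) {c : A} {p : A[X]} (h : kroneckerSubst A w f = C c * p) :
    f = MvPolynomial.C c * kroneckerUnsubst A w e p := by
  rw [← MvPolynomial.smul_eq_C_mul, ← map_smul, smul_eq_C_mul, ← h,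
    kroneckerUnsubst_kroneckerSubst hw hf]

theorem exists_associated_kroneckerUnsubst_prod {σ ι E : Type*} [Field E] [DecidableEq ι]
    {w : σ → ℕ} {e : ℕ} (hw : Set.InjOn (Finsupp.weight w) {m | m.degree < e}) {s : Finset ι}
    {r : ι → E[X]} (hr : ∀ i ∈ s, Irreducible (r i)) {f g : MvPolynomial σ E}
    (hf : f.totalDegree < e) (hg : g.totalDegree < e)
    (hfg : kroneckerSubst E w (f * g) = ∏ i ∈ s, r i) :
    ∃ t ⊆ s, Associated (kroneckerUnsubst E w e (∏ i ∈ t, r i)) f ∧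
      Associated (kroneckerUnsubst E w e (∏ i ∈ s \ t, r i)) g ∧
      kroneckerUnsubst E w e (∏ i ∈ t, r i) * kroneckerUnsubst E w e (∏ i ∈ s \ t, r i) =
        f * g := by
  rw [map_mul, ← one_mul (∏ i ∈ s, r i)] at hfg
  obtain ⟨t, u, b, c, rfl, htu, hbc, hft, hgu⟩ :=
    mul_eq_mul_prime_prod (fun i hi => (hr i hi).prime) hfg
  have hbc1 : IsUnit (b * c) := hbc ▸ isUnit_one
  obtain ⟨β, hβ, rfl⟩ := isUnit_iff.1 (isUnit_of_mul_isUnit_left hbc1)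
  obtain ⟨γ, hγ, rfl⟩ := isUnit_iff.1 (isUnit_of_mul_isUnit_right hbc1)
  have hβγ : β * γ = 1 := C_injective (by rw [C_mul, ← hbc, C_1])
  have hf' := eq_C_mul_kroneckerUnsubst hw hf hft
  have hg' := eq_C_mul_kroneckerUnsubst hw hg hgu
  rw [← Finset.union_sdiff_cancel_left htu] at hg'
  refine ⟨t, Finset.subset_union_left, ?_, ?_, ?_⟩
  · rw [hf']
    exact associated_unit_mul_right _ _ (hβ.map MvPolynomial.C)
  · rw [hg']
    exact associated_unit_mul_right _ _ (hγ.map MvPolynomial.C)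
  · rw [hf', hg', mul_mul_mul_comm, ← MvPolynomial.C_mul, hβγ, MvPolynomial.C_1, one_mul]

theorem finite_setOf_map_evalRingHom_eq {σ k : Type*} [CommRing k] [IsDomain k]
    {P Q : MvPolynomial σ k[X]} (h : P ≠ Q) :
    {a : k | MvPolynomial.map (evalRingHom a) P = MvPolynomial.map (evalRingHom a) Q}.Finite := by
  obtain ⟨m, hm⟩ := MvPolynomial.ne_zero_iff.1 (sub_ne_zero.2 h)
  refine (finite_setOfPred_isRoot hm).subset fun a ha => ?_
  simpa [sub_eq_zero, MvPolynomial.coeff_map] using congrArg (MvPolynomial.coeff m) ha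

theorem totalDegree_map_le {σ A B : Type*} [CommSemiring A] [CommSemiring B] (f : A →+* B)
    (P : MvPolynomial σ A) : (MvPolynomial.map f P).totalDegree ≤ P.totalDegree :=
  Finset.sup_mono (MvPolynomial.support_map_subset f P)

section KroneckerSpecialization

variable {σ A k : Type*} [CommRing A] [Field k] {ev : A →+* k} {w : σ → ℕ} {e : ℕ}
  {P : MvPolynomial σ A}

theorem not_isUnit_map_of_monic_kroneckerSubst
    (hw : Set.InjOn (Finsupp.weight w) {m | m.degree < e}) (hP : ¬IsUnit P)
    (he : P.totalDegree < e) (hmonic : (kroneckerSubst A w P).Monic) :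
    ¬IsUnit (MvPolynomial.map ev P) := by
  intro hunit
  replace hunit := hunit.map (kroneckerSubst k w)
  rw [kroneckerSubst_map] at hunit
  have hone : kroneckerSubst A w P = 1 := by
    rw [← hmonic.natDegree_eq_zero, ← hmonic.natDegree_map ev]
    exact natDegree_eq_zero_of_isUnit hunit
  have hP1 : P = 1 := kroneckerSubst_injOn hw he
    (by rw [Set.mem_ofPred_eq, MvPolynomial.totalDegree_one]; exact he.pos) (by rw [hone, map_one])
  exact hP (hP1 ▸ isUnit_one)

/-- As in Kronecker's factorization algorithm, a factorization of the specialization of `P` comes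
from a partition of the factors `q i`; by `hlift` this partition already factors `P`. -/
theorem irreducible_map_of_prod_eq_kroneckerSubst
    (hw : Set.InjOn (Finsupp.weight w) {m | m.degree < e}) (hP : Irreducible P)
    (he : P.totalDegree < e) (hmonic : (kroneckerSubst A w P).Monic) {ι : Type*} [Fintype ι]
    [DecidableEq ι] {q : ι → A[X]} (hq : ∏ i, q i = kroneckerSubst A w P)
    (hirr : ∀ i, Irreducible ((q i).map ev))
    (hlift : ∀ t : Finset ι,
      MvPolynomial.map ev (kroneckerUnsubst A w e (∏ i ∈ t, q i) *
        kroneckerUnsubst A w e (∏ i ∈ tᶜ, q i)) = MvPolynomial.map ev P →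
      kroneckerUnsubst A w e (∏ i ∈ t, q i) * kroneckerUnsubst A w e (∏ i ∈ tᶜ, q i) = P) :
    Irreducible (MvPolynomial.map ev P) := by
  have hkron : kroneckerSubst k w (MvPolynomial.map ev P) = ∏ i, (q i).map ev := by
    rw [kroneckerSubst_map, ← hq, Polynomial.map_prod]
  have hne : MvPolynomial.map ev P ≠ 0 := by
    refine ne_zero_of_map (f := kroneckerSubst k w) ?_
    rw [kroneckerSubst_map]
    exact (hmonic.map ev).ne_zero
  have hdvd {f : MvPolynomial σ k} (hf : f ∣ MvPolynomial.map ev P) : f.totalDegree < e :=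
    (MvPolynomial.totalDegree_le_of_dvd_of_isDomain hf hne).trans_lt
      ((totalDegree_map_le ev P).trans_lt he)
  refine ⟨not_isUnit_map_of_monic_kroneckerSubst hw hP.not_isUnit he hmonic, fun f g hfg => ?_⟩
  obtain ⟨t, -, htf, htg, hprod⟩ := exists_associated_kroneckerUnsubst_prod hw
    (fun i (_ : i ∈ Finset.univ) => hirr i) (hdvd (Dvd.intro _ hfg.symm))
    (hdvd (Dvd.intro_left _ hfg.symm)) (hfg ▸ hkron)
  rw [← Finset.compl_eq_univ_sdiff] at htg hprod
  rw [← Polynomial.map_prod, kroneckerUnsubst_map] at htf htg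
  rw [← Polynomial.map_prod, ← Polynomial.map_prod, kroneckerUnsubst_map, kroneckerUnsubst_map,
    ← map_mul, ← hfg] at hprod
  exact (hP.isUnit_or_isUnit (hlift t hprod).symm).imp (fun h => htf.isUnit (h.map _))
    fun h => htg.isUnit (h.map _)

end KroneckerSpecialization

theorem IsHilbertian.exists_irreducible_map_evalRingHom {σ k : Type*} [Field k] [CharZero k]
    (hk : IsHilbertian k) {w : σ → ℕ} {e : ℕ}
    (hw : Set.InjOn (Finsupp.weight w) {m | m.degree < e}) {P : MvPolynomial σ k[X]}
    (hP : Irreducible P) (he : P.totalDegree < e) (hmonic : (kroneckerSubst k[X] w P).Monic) :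
    ∃ a : k, Irreducible (MvPolynomial.map (evalRingHom a) P) := by
  classical
  obtain ⟨s, hs, hprod⟩ := exists_multiset_prod_eq_of_monic hmonic
  let factor (t : Finset s) : MvPolynomial σ k[X] := kroneckerUnsubst k[X] w e (∏ i ∈ t, ↑i)
  have hfinite : (⋃ t ∈ {t : Finset s | factor t * factor tᶜ ≠ P}, {a : k |
      MvPolynomial.map (evalRingHom a) (factor t * factor tᶜ) =
        MvPolynomial.map (evalRingHom a) P}).Finite :=
    (Set.toFinite _).biUnion fun t ht => finite_setOf_map_evalRingHom_eq ht
  have hinf := hk.infinite_forall_irreducible_map_evalRingHom (s := s.toFinset) (by simpa using hs)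
  obtain ⟨a, ha, hacoinc⟩ := hinf.exists_notMem_finite hfinite
  refine ⟨a, irreducible_map_of_prod_eq_kroneckerSubst hw hP he hmonic (q := fun i : s => i)
    ?_ (fun i => ha i (Multiset.mem_toFinset.2 (Multiset.coe_mem))) fun t h => ?_⟩
  · rw [Finset.prod_eq_multiset_prod, Multiset.map_univ_coe, hprod]
  · by_contra hne
    exact hacoinc (Set.mem_biUnion hne h)

theorem map_finSuccEquiv_symm {A B : Type*} [CommRing A] [CommRing B] (f : A →+* B) {n : ℕ}
    (G : (MvPolynomial (Fin n) A)[X]) :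
    MvPolynomial.map f ((MvPolynomial.finSuccEquiv A n).symm G) =
      (MvPolynomial.finSuccEquiv B n).symm (G.map (MvPolynomial.map f)) := by
  obtain ⟨P, rfl⟩ := (MvPolynomial.finSuccEquiv A n).surjective G
  rw [AlgEquiv.symm_apply_apply, AlgEquiv.eq_symm_apply]
  induction P using MvPolynomial.induction_on with
  | C c => simp [MvPolynomial.finSuccEquiv_apply]
  | add P Q hP hQ => simp only [map_add, Polynomial.map_add, hP, hQ]
  | mul_X P i hP =>
    cases i using Fin.cases <;>
      simp [hP, MvPolynomial.finSuccEquiv_X_zero, MvPolynomial.finSuccEquiv_X_succ]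

theorem irreducible_map_ringEquiv_iff {A B : Type*} [CommRing A] [CommRing B] (ε : A ≃+* B)
    {G : A[X]} : Irreducible (G.map (ε : A →+* B)) ↔ Irreducible G :=
  MulEquiv.irreducible_iff (Polynomial.mapEquiv ε)

theorem IsHilbertian.exists_irreducible_map_map_evalRingHom {k : Type*} [Field k] [CharZero k]
    (hk : IsHilbertian k) {n : ℕ} {G : (MvPolynomial (Fin n) k[X])[X]} (hG : G.Monic)
    (hirr : Irreducible G) :
    ∃ a : k, Irreducible (G.map (MvPolynomial.map (evalRingHom a))) := by
  obtain ⟨a, ha⟩ := hk.exists_irreducible_map_evalRingHom injOn_weight_kroneckerWeight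
    ((MulEquiv.irreducible_iff (MvPolynomial.finSuccEquiv k[X] n).symm).2 hirr) (Nat.lt_succ_self _)
    (monic_kroneckerSubst_finSuccEquiv_symm hG (Nat.lt_succ_self _))
  rw [map_finSuccEquiv_symm] at ha
  exact ⟨a, (MulEquiv.irreducible_iff (MvPolynomial.finSuccEquiv k n).symm).1 ha⟩

/-- The isomorphism `A[x₀, …, xₙ] ≃ A[x₀][x₁, …, xₙ]`. -/
noncomputable def mvPolynomialFinSuccEquivRight (A : Type*) [CommRing A] (n : ℕ) :
    MvPolynomial (Fin (n + 1)) A ≃ₐ[A] MvPolynomial (Fin n) A[X] :=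
  (MvPolynomial.renameEquiv A (_root_.finSuccEquiv n)).trans
    (MvPolynomial.optionEquivRight A (Fin n))

theorem eval_comp_map_evalRingHom_comp_finSuccEquivRight {A : Type*} [CommRing A] {n : ℕ}
    (a : A) (t : Fin n → A) :
    ((MvPolynomial.eval t).comp (MvPolynomial.map (evalRingHom a))).comp
        (mvPolynomialFinSuccEquivRight A n : MvPolynomial (Fin (n + 1)) A →+* _) =
      MvPolynomial.eval (Fin.cons a t) := by
  ext i
  · simp [mvPolynomialFinSuccEquivRight]
  · cases i using Fin.cases <;> simp [mvPolynomialFinSuccEquivRight]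

theorem IsHilbertian.exists_irreducible_map_eval {k : Type*} [Field k] [CharZero k]
    (hk : IsHilbertian k) {n : ℕ} {G : (MvPolynomial (Fin n) k)[X]} (hG : G.Monic)
    (hirr : Irreducible G) : ∃ t : Fin n → k, Irreducible (G.map (MvPolynomial.eval t)) := by
  induction n with
  | zero =>
    have heval : MvPolynomial.eval (Fin.elim0 : Fin 0 → k) =
        (MvPolynomial.isEmptyRingEquiv k (Fin 0) : MvPolynomial (Fin 0) k →+* k) := by
      ext i
      · exact (MvPolynomial.eval_C i).trans
          ((MvPolynomial.isEmptyRingEquiv k (Fin 0)).apply_symm_apply i).symm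
      · exact i.elim0
    exact ⟨Fin.elim0, by rwa [heval, irreducible_map_ringEquiv_iff]⟩
  | succ n ih =>
    let ε := (mvPolynomialFinSuccEquivRight k n).toRingEquiv
    have hirr' := (irreducible_map_ringEquiv_iff ε).2 hirr
    obtain ⟨a, ha⟩ := hk.exists_irreducible_map_map_evalRingHom (hG.map _) hirr'
    obtain ⟨t, ht⟩ := ih ((hG.map _).map _) ha
    rw [Polynomial.map_map, Polynomial.map_map] at ht
    exact ⟨Fin.cons a t, eval_comp_map_evalRingHom_comp_finSuccEquivRight a t ▸ ht⟩

section ResidueDegree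

variable {A k O Ω : Type*} [CommRing A] [IsDomain A] [IsIntegrallyClosed A] [Field k] [CommRing O]
  [IsDomain O] [Field Ω] [Algebra A O] [Algebra k Ω] {ev : A →+* k} {ψ : O →+* Ω}
  (K L : Type*) [Field K] [Algebra A K] [IsFractionRing A K] [Field L] [Algebra O L] [Algebra K L]
  [Algebra A L] [IsScalarTower A K L] [IsScalarTower A O L] [FiniteDimensional K L]
  [FiniteDimensional k Ω]

theorem LiesOverSpecialization.finrank_le_of_surjective [Algebra.IsIntegral A O]
    [Algebra.IsSeparable k Ω] (hψ : LiesOverSpecialization ev ψ) (hsurj : Function.Surjective ψ) :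
    Module.finrank k Ω ≤ Module.finrank K L := by
  obtain ⟨y, hy⟩ := Field.exists_primitive_element k Ω
  obtain ⟨x, rfl⟩ := hsurj y
  have hx : IsIntegral A x := Algebra.IsIntegral.isIntegral x
  calc Module.finrank k Ω = (minpoly k (ψ x)).natDegree :=
        ((Field.primitive_element_iff_minpoly_natDegree_eq k _).1 hy).symm
    _ ≤ (minpoly A x).natDegree := hψ.natDegree_minpoly_le hx
    _ = (minpoly K (algebraMap O L x)).natDegree := (natDegree_minpoly_algebraMap hx).symm
    _ ≤ Module.finrank K L := minpoly.natDegree_le _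

theorem LiesOverSpecialization.le_finrank_of_adjoin_eq_top (hψ : LiesOverSpecialization ev ψ)
    {θ : O} (hθ : IsIntegral A θ) (htop : IntermediateField.adjoin K {algebraMap O L θ} = ⊤)
    (hirr : Irreducible ((minpoly A θ).map ev)) : Module.finrank K L ≤ Module.finrank k Ω := by
  calc Module.finrank K L = (minpoly K (algebraMap O L θ)).natDegree :=
        ((Field.primitive_element_iff_minpoly_natDegree_eq K _).1 htop).symm
    _ = (minpoly A θ).natDegree := natDegree_minpoly_algebraMap hθ
    _ = (minpoly k (ψ θ)).natDegree := by
        rw [hψ.minpoly_eq_map hθ hirr, (minpoly.monic hθ).natDegree_map]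
    _ ≤ Module.finrank k Ω := minpoly.natDegree_le _

end ResidueDegree

theorem exists_isMaximal_liesOverSpecialization_mk {k A R : Type*} [Field k] [CommRing A]
    [CommRing R] [Algebra k A] [Algebra k R] [Algebra A R] [IsScalarTower k A R]
    [Algebra.IsIntegral A R] [FaithfulSMul A R] (ev : A →ₐ[k] k) :
    ∃ Q : Ideal R, Q.IsMaximal ∧ LiesOverSpecialization (ev : A →+* k) (Ideal.Quotient.mk Q) := by
  have hmax : (RingHom.ker ev).IsMaximal :=
    RingHom.ker_isMaximal_of_surjective ev fun c => ⟨algebraMap k A c, ev.commutes c⟩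
  obtain ⟨Q, hQ, hQev⟩ :=
    Ideal.exists_maximal_ideal_liesOver_of_isIntegral (S := R) (RingHom.ker ev)
  refine ⟨Q, hQ, RingHom.ext fun a => ?_⟩
  have hker : a - algebraMap k A (ev a) ∈ RingHom.ker ev := by
    rw [RingHom.mem_ker, map_sub, ev.commutes, Algebra.algebraMap_self_apply, sub_self]
  rw [hQev.over, Ideal.mem_comap, map_sub, ← IsScalarTower.algebraMap_apply] at hker
  exact Ideal.Quotient.eq.2 hker

universe u

theorem finrank_eq_one_of_forall_exists_comp_eq {k A S : Type*} {R : Type u} [Field k] [CharZero k]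
    [CommRing A] [IsDomain A] [IsIntegrallyClosed A] [CommRing R] [IsDomain R] [CommRing S]
    [IsDomain S] [Algebra k A] [Algebra k R] [Algebra k S] [Algebra A R] [Algebra A S]
    [Algebra R S] [IsScalarTower k A R] [IsScalarTower k R S] [IsScalarTower A R S]
    [Algebra.FiniteType k R] [Module.Finite A R] [Module.Finite R S] [FaithfulSMul A R]
    [FaithfulSMul R S] (K KR KS : Type*) [Field K] [Field KR] [Field KS]
    [Algebra A K] [IsFractionRing A K] [Algebra R KR] [IsFractionRing R KR] [Algebra S KS]
    [IsFractionRing S KS] [Algebra A KR] [Algebra A KS] [Algebra K KR] [Algebra K KS]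
    [Algebra KR KS] [IsScalarTower K KR KS] [IsScalarTower A R KR] [IsScalarTower A S KS]
    [IsScalarTower A K KR] [IsScalarTower A K KS]
    (hA : ∀ G : A[X], G.Monic → Irreducible G →
      ∃ ev : A →ₐ[k] k, Irreducible (G.map (ev : A →+* k)))
    (hlift : ∀ (h : Type u) [Field h] [Algebra k h] [FiniteDimensional k h] (ψ : R →ₐ[k] h),
      ∃ χ : S →ₐ[k] h, χ.comp (IsScalarTower.toAlgHom k R S) = ψ) :
    Module.finrank KR KS = 1 := by
  have : Module.Finite A S := Module.Finite.trans R S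
  have : FaithfulSMul A S := .trans A R S
  have : FiniteDimensional K KR := Module.Finite.of_isLocalization A R (nonZeroDivisors A)
  have : FiniteDimensional K KS := Module.Finite.of_isLocalization A S (nonZeroDivisors A)
  have : FiniteDimensional KR KS := FiniteDimensional.right K KR KS
  have : CharZero A := charZero_of_injective_algebraMap (FaithfulSMul.algebraMap_injective k A)
  have : CharZero K := charZero_of_injective_algebraMap (IsFractionRing.injective A K)
  obtain ⟨θ, hθ⟩ := exists_adjoin_algebraMap_eq_top A S K KS
  have hint : IsIntegral A θ := Algebra.IsIntegral.isIntegral θ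
  obtain ⟨ev, hev⟩ := hA _ (minpoly.monic hint) (minpoly.irreducible hint)
  obtain ⟨Q, hQ, hQev⟩ := exists_isMaximal_liesOverSpecialization_mk (R := R) ev
  let : Field (R ⧸ Q) := Ideal.Quotient.field Q
  have : FiniteDimensional k (R ⧸ Q) := finite_of_finite_type_of_isJacobsonRing k (R ⧸ Q)
  obtain ⟨χ, hχ⟩ := hlift (R ⧸ Q) (Ideal.Quotient.mkₐ k Q)
  have hχev : LiesOverSpecialization (ev : A →+* k) (χ : S →+* R ⧸ Q) := by
    refine RingHom.ext fun a => ?_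
    have hχa := DFunLike.congr_fun hχ (algebraMap A R a)
    simp only [AlgHom.comp_apply, IsScalarTower.coe_toAlgHom',
      ← IsScalarTower.algebraMap_apply] at hχa
    exact hχa.trans (hQev.apply_algebraMap a)
  have hle : Module.finrank K KR * Module.finrank KR KS ≤ Module.finrank K KR * 1 :=
    calc Module.finrank K KR * Module.finrank KR KS = Module.finrank K KS :=
          Module.finrank_mul_finrank K KR KS
      _ ≤ Module.finrank k (R ⧸ Q) := hχev.le_finrank_of_adjoin_eq_top K KS hint hθ hev
      _ ≤ Module.finrank K KR :=
          hQev.finrank_le_of_surjective K KR Ideal.Quotient.mk_surjective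
      _ = Module.finrank K KR * 1 := (mul_one _).symm
  exact (Nat.le_of_mul_le_mul_left hle Module.finrank_pos).antisymm Module.finrank_pos

theorem IsHilbertian.finrank_fractionField_eq_one {k S : Type*} {R : Type u} [Field k] [CharZero k]
    (hk : IsHilbertian k) [CommRing R] [IsDomain R] [CommRing S] [IsDomain S] [Algebra k R]
    [Algebra k S] [Algebra R S] [IsScalarTower k R S] [Algebra.FiniteType k R] [Module.Finite R S]
    [FaithfulSMul R S] (KR KS : Type*) [Field KR] [Field KS] [Algebra R KR] [IsFractionRing R KR]
    [Algebra S KS] [IsFractionRing S KS] [Algebra R KS] [Algebra KR KS]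
    [IsScalarTower R KR KS] [IsScalarTower R S KS]
    (hlift : ∀ (h : Type u) [Field h] [Algebra k h] [FiniteDimensional k h] (ψ : R →ₐ[k] h),
      ∃ χ : S →ₐ[k] h, χ.comp (IsScalarTower.toAlgHom k R S) = ψ) :
    Module.finrank KR KS = 1 := by
  obtain ⟨n, g, hg, hgfin⟩ := exists_finite_inj_algHom_of_fg k R
  let A := MvPolynomial (Fin n) k
  let : Algebra A R := g.toRingHom.toAlgebra
  let : Algebra A S := .compHom S (algebraMap A R)
  let : Algebra A KR := .compHom KR (algebraMap A R)
  let : Algebra A KS := .compHom KS (algebraMap A R)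
  have : IsScalarTower k A R := .of_algebraMap_eq fun c => (g.commutes c).symm
  have : IsScalarTower A R S := .of_algebraMap_eq fun _ => rfl
  have : IsScalarTower A R KR := .of_algebraMap_eq fun _ => rfl
  have : IsScalarTower A R KS := .of_algebraMap_eq fun _ => rfl
  have : IsScalarTower A S KS := .to₁₃₄ A R S KS
  have : IsScalarTower A KR KS := .to₁₃₄ A R KR KS
  have : Module.Finite A R := hgfin
  have : FaithfulSMul A R := (faithfulSMul_iff_algebraMap_injective A R).2 hg
  have : FaithfulSMul A KR := .trans A R KR
  have : FaithfulSMul A KS := .trans A KR KS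
  let : Algebra (FractionRing A) KR := FractionRing.liftAlgebra A KR
  let : Algebra (FractionRing A) KS := FractionRing.liftAlgebra A KS
  refine finrank_eq_one_of_forall_exists_comp_eq (A := A) (FractionRing A) KR KS
    (fun G hG hirr => ?_) hlift
  obtain ⟨t, ht⟩ := hk.exists_irreducible_map_eval hG hirr
  exact ⟨MvPolynomial.aeval t, by rwa [MvPolynomial.coe_aeval_eq_eval]⟩

/--
Let `k` be a Hilbertian field of characteristic 0 and `f : Y → X` a
finite dominant morphism of affine integral schemes of finite type over `k`.
Algebraically: `X = Spec R`, `Y = Spec S` with `R`, `S` integral domains which are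
finitely generated `k`-algebras, and `f` corresponds to an injective (dominance) finite
`k`-algebra homomorphism `φ : R → S`.  An `h`-point of `X` is a `k`-algebra homomorphism
`R →ₐ[k] h`, and the map `Y (h) → X (h)` is composition with `φ`.  If `Y (h) → X (h)` is
surjective for every finite field extension `h/k`, then `f` is birational, i.e. the
induced extension of function fields `k(X) = Frac R → Frac S = k(Y)` is an isomorphism.
-/
theorem stmt_4 (k : Type) [Field k] [CharZero k] (hk : IsHilbertian k)
    (R S : Type) [CommRing R] [CommRing S] [IsDomain R] [IsDomain S]
    [Algebra k R] [Algebra k S]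
    (hR : Algebra.FiniteType k R) (hS : Algebra.FiniteType k S)
    (φ : R →ₐ[k] S) (hdom : Function.Injective φ) (hfin : φ.Finite)
    (hsurj : ∀ (h : Type) [Field h] [Algebra k h] [FiniteDimensional k h]
      (ψ : R →ₐ[k] h), ∃ χ : S →ₐ[k] h, χ.comp φ = ψ) :
    Function.Bijective
      (IsFractionRing.lift
        (g := ((algebraMap S (FractionRing S)).comp (φ : R →+* S)))
        ((IsFractionRing.injective S (FractionRing S)).comp hdom) :
        FractionRing R →+* FractionRing S) := by
  let : Algebra R S := φ.toRingHom.toAlgebra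
  have : IsScalarTower k R S := .of_algebraMap_eq fun c => (φ.commutes c).symm
  have : Module.Finite R S := hfin
  have : FaithfulSMul R S := (faithfulSMul_iff_algebraMap_injective R S).2 hdom
  let : Algebra (FractionRing R) (FractionRing S) := RingHom.toAlgebra <|
    IsFractionRing.lift (g := (algebraMap S (FractionRing S)).comp (φ : R →+* S))
      ((IsFractionRing.injective S (FractionRing S)).comp hdom)
  have : IsScalarTower R (FractionRing R) (FractionRing S) :=
    .of_algebraMap_eq fun r => (IsFractionRing.lift_algebraMap _ r).symm
  exact Algebra.finrank_eq_one_iff_bijective_algebraMap.1 <|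
    hk.finrank_fractionField_eq_one (FractionRing R) (FractionRing S) hsurj
end
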